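/- Let ν be the unique probability measure on LO_0 invariant for the process seen from the front (i.e. Q_t ν = ν for all t ≥ 0, where Q_t π is the pushforward under θ of ∫ P_t(ω,·) dπ(ω)). There exist constants ε > 0 and K < ∞ such that for all natural numbers L and M and every measurable set A ⊆ Ω depending only on the coordinates in ⟦L, L+M⟧: | ν(A) − μ(A) | ≤ K·e^{−ε·L}. -/

import Mathlib

open MeasureTheory ProbabilityTheory Filter Topology

noncomputable section

/-- The configuration space of the East model on `ℤ`: `0` ↔ `false` (empty), `1` ↔ `true`. -/
abbrev Config : Type := ℤ → Bool

/-- The configuration `ω` flipped at site `x`. -/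
def flipAt (ω : Config) (x : ℤ) : Config := fun y => if y = x then !ω x else ω y

/-- `f` depends only on the coordinates in `S`. -/
def DependsOnF (f : Config → ℝ) (S : Set ℤ) : Prop :=
  ∀ ω ω' : Config, (∀ x ∈ S, ω x = ω' x) → f ω = f ω'

/-- The set `A` depends only on the coordinates in `S`. -/
def DependsOnSet (A : Set Config) (S : Set ℤ) : Prop :=
  ∀ ω ω' : Config, (∀ x ∈ S, ω x = ω' x) → (ω ∈ A ↔ ω' ∈ A)

/-- A cylinder (local) function: depends on finitely many coordinates. -/
def IsCylinder (f : Config → ℝ) : Prop := ∃ S : Finset ℤ, DependsOnF f ↑S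

/-- The East generator at density `p` of ones. -/
def eastGen (p : ℝ) (f : Config → ℝ) (ω : Config) : ℝ :=
  ∑' x : ℤ, (if ω (x + 1) = false then (1 : ℝ) else 0) *
    (if ω x = false then p else 1 - p) * (f (flipAt ω x) - f ω)

/-- Spatial translation: `(shift y ω) x = ω (x + y)`. -/
def shift (y : ℤ) (ω : Config) : Config := fun x => ω (x + y)

/-- Left-occupied configurations: identically `1` on a left half-line, with an empty site. -/
def LO : Set Config := {ω | (∃ y : ℤ, ∀ x < y, ω x = true) ∧ ∃ x, ω x = false}

/-- The front: position of the left-most zero. -/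
def front (ω : Config) : ℤ := sInf {x : ℤ | ω x = false}

/-- Left-occupied configurations with front at the origin. -/
def LO₀ : Set Config := {ω ∈ LO | front ω = 0}

/-- The configuration seen at distance `L` behind the front. -/
def θL (L : ℤ) (ω : Config) : Config := fun x =>
  if x < 0 then true else if x = 0 then false else ω (front ω + L + x)

/-- `f` averaged over the coordinate at site `1` w.r.t. Bernoulli(p). -/
def avg1 (p : ℝ) (f : Config → ℝ) (ω : Config) : ℝ :=
  p * f (Function.update ω 1 true) + (1 - p) * f (Function.update ω 1 false)

/-- The East process on `ℤ` at density `p`, together with its equilibrium measure. -/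
structure EastProcess where
  /-- equilibrium density of ones -/
  p : ℝ
  hp0 : 0 < p
  hp1 : p < 1
  /-- the Markov semigroup -/
  P : ℝ → Kernel Config Config
  markov : ∀ t : ℝ, IsMarkovKernel (P t)
  P0 : P 0 = Kernel.id
  semigroup : ∀ s t : ℝ, 0 ≤ s → 0 ≤ t → P (t + s) = (P s).comp (P t)
  feller : ∀ t : ℝ, 0 ≤ t → ∀ f : Config → ℝ, Continuous f →
    Continuous fun ω : Config => ∫ η, f η ∂(P t ω)
  timeCont : ∀ f : Config → ℝ, Continuous f → ∀ ω : Config,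
    Continuous fun t : ℝ => ∫ η, f η ∂(P t ω)
  shiftComm : ∀ t : ℝ, 0 ≤ t → ∀ y : ℤ, ∀ ω : Config,
    P t (shift y ω) = Measure.map (shift y) (P t ω)
  generator : ∀ f : Config → ℝ, IsCylinder f → ∀ ω : Config,
    HasDerivWithinAt (fun u : ℝ => ∫ η, f η ∂(P u ω)) (eastGen p f ω) (Set.Ici 0) 0
  /-- the product Bernoulli(p) measure -/
  μ : Measure Config
  μprob : IsProbabilityMeasure μ
  μprod : ∀ (S : Finset ℤ) (σ : ℤ → Bool),
    μ {ω : Config | ∀ x ∈ S, ω x = σ x} = ∏ x ∈ S, ENNReal.ofReal (if σ x then p else 1 - p)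
  /-- LO is stable for the dynamics -/
  loStable : ∀ t : ℝ, 0 ≤ t → ∀ ω ∈ LO, P t ω LO = 1

/-- The set of Rayleigh quotients defining the spectral gap. -/
def gapSet (E : EastProcess) : Set ℝ :=
  {r | ∃ f : Config → ℝ, IsCylinder f ∧ 0 < variance f E.μ ∧
    r = (-∫ ω, f ω * eastGen E.p f ω ∂E.μ) / variance f E.μ}

/-- The spectral gap of the East process. -/
def gap (E : EastProcess) : ℝ := sInf (gapSet E)

/-- The product measure `μ̃`: all ones on the negative half-line, a zero at the origin,
Bernoulli(p) on the positive half-line. -/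
def IsMuTilde (p : ℝ) (μt : Measure Config) : Prop :=
  IsProbabilityMeasure μt ∧
  ∀ (S : Finset ℤ) (σ : ℤ → Bool),
    μt {ω : Config | ∀ x ∈ S, ω x = σ x} =
      ∏ x ∈ S, ENNReal.ofReal
        (if x < 0 then (if σ x then 1 else 0)
         else if x = 0 then (if σ x then 0 else 1)
         else (if σ x then p else 1 - p))

/-- The law at time `t` of the process seen from the front started from `π`. -/
def Qt (E : EastProcess) (t : ℝ) (π : Measure Config) : Measure Config :=
  Measure.map (θL 0) (π.bind fun ω => E.P t ω)

/-!
The process seen from the front is compared with the stationary process by a relaxation estimate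
at a distinguished empty site. If `x₀` is empty then, up to the first change at `x₀`, the dynamics
on `[a, x₀)` is a reversible chain whose spectral gap is at least `gap`. Letting `x₀` range over
all empty sites and following the weighted family of `L²` norms of the conditioned observables, an
observable centred on `[a, x₀)` is shown to relax like `e^{-gap t / 2}`, up to a factor
`e^{c (x₀ - a)}` for passing from `L²` to a pointwise bound.

Run the dynamics for a time of order `l` from the invariant measure `ν` and look at an observable
`f` located at distance of order `l` from the front and centred at its leftmost site. The front
has moved a distance between `l` and a constant multiple of `l`, so `f` is a sum, over the possible
final positions of the front, of observables to which the relaxation estimate applies, the empty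
site `x₀` being one of the `l` sites following the support; such a site exists with high `ν`
probability, again by relaxation. Hence `|ν(f)|` is exponentially small in the distance, and
telescoping over the sites of an arbitrary event gives the result.
-/

namespace EastModel

section SemigroupBounds

variable {V ι : Type*} [NormedAddCommGroup V] [NormedSpace ℝ V]

/-- The vector `v` is bounded by `K * w i` in the `i`-th seminorm for every `i`. A zero weight
encodes a linear constraint on `v`. -/
def WeightedBound (ρ : ι → Seminorm ℝ V) (w : ι → ℝ) (K : ℝ) (v : V) : Prop :=
  ∀ i, ρ i v ≤ K * w i

variable {ρ : ι → Seminorm ℝ V} {w : ι → ℝ}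

lemma WeightedBound.iterate {T : V →L[ℝ] V} {κ K : ℝ} {v : V}
    (step : ∀ (u : V) (C : ℝ), 0 ≤ C → WeightedBound ρ w C u → WeightedBound ρ w (κ * C) (T u))
    (hκ : 0 ≤ κ) (hK : 0 ≤ K) (hv : WeightedBound ρ w K v) (n : ℕ) :
    WeightedBound ρ w (κ ^ n * K) ((T ^ n) v) := by
  induction n with
  | zero => simpa using hv
  | succ n ih =>
    rw [pow_succ', pow_succ', mul_assoc]
    exact step _ _ (by positivity) ih

/-- The uniformly continuous semigroup generated by the bounded operator `L`. -/
def expSemigroup (L : V →L[ℝ] V) (t : ℝ) : V →L[ℝ] V := NormedSpace.exp (t • L)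

lemma expSemigroup_zero (L : V →L[ℝ] V) : expSemigroup L 0 = 1 := by
  rw [expSemigroup, zero_smul, NormedSpace.exp_zero]

variable [CompleteSpace V]

lemma hasSum_expSemigroup_apply (T : V →L[ℝ] V) (t : ℝ) (v : V) :
    HasSum (fun n : ℕ => (t ^ n / n.factorial) • (T ^ n) v) (expSemigroup T t v) := by
  have h := (NormedSpace.exp_series_hasSum_exp' (𝕂 := ℝ) (t • T)).mapL
    (ContinuousLinearMap.apply ℝ V v)
  simpa only [smul_pow, smul_smul, map_smul, ContinuousLinearMap.apply_apply,
    inv_mul_eq_div, expSemigroup] using h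

lemma expSemigroup_add_smul_one (L : V →L[ℝ] V) (c t : ℝ) :
    expSemigroup (L + c • 1) t = Real.exp (t * c) • expSemigroup L t := by
  let : NormedAlgebra ℚ (V →L[ℝ] V) := NormedAlgebra.restrictScalars ℚ ℝ _
  have hscalar : NormedSpace.exp ((t * c) • (1 : V →L[ℝ] V)) = Real.exp (t * c) • 1 := by
    simpa only [Algebra.algebraMap_eq_smul_one, Real.exp_eq_exp_ℝ] using
      (NormedSpace.algebraMap_exp_comm (𝕂 := ℝ) (𝔸 := V →L[ℝ] V) (t * c)).symm
  rw [expSemigroup, smul_add, smul_smul, add_comm, NormedSpace.exp_add_of_commute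
    ((Commute.one_left _).smul_left _), hscalar, smul_mul_assoc, one_mul, expSemigroup]

lemma WeightedBound.expSemigroup_apply {T : V →L[ℝ] V} {κ K t : ℝ} {v : V}
    (hρ : ∀ i, Continuous (ρ i)) (hw : ∀ i, 0 ≤ w i)
    (step : ∀ (u : V) (C : ℝ), 0 ≤ C → WeightedBound ρ w C u → WeightedBound ρ w (κ * C) (T u))
    (hκ : 0 ≤ κ) (hK : 0 ≤ K) (hv : WeightedBound ρ w K v) (ht : 0 ≤ t) :
    WeightedBound ρ w (Real.exp (t * κ) * K) (expSemigroup T t v) := by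
  intro i
  refine le_of_tendsto (((hρ i).tendsto _).comp (hasSum_expSemigroup_apply T t v).tendsto_sum_nat)
    (Eventually.of_forall fun N => ?_)
  calc ρ i (∑ n ∈ Finset.range N, (t ^ n / n.factorial) • (T ^ n) v)
      ≤ ∑ n ∈ Finset.range N, ρ i ((t ^ n / n.factorial) • (T ^ n) v) :=
        Finset.le_sum_of_subadditive (ρ i) (map_zero _).le (map_add_le_add _) _ _
    _ ≤ ∑ n ∈ Finset.range N, (t * κ) ^ n / n.factorial * (K * w i) := by
        refine Finset.sum_le_sum fun n _ => ?_
        rw [map_smul_eq_mul, Real.norm_of_nonneg (by positivity)]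
        calc _ ≤ t ^ n / n.factorial * (κ ^ n * K * w i) := by
              gcongr
              exact hv.iterate step hκ hK n i
          _ = _ := by rw [mul_pow]; ring
    _ ≤ Real.exp (t * κ) * (K * w i) := by
        rw [← Finset.sum_mul]
        have := hw i
        gcongr
        exact Real.sum_le_exp_of_nonneg (by positivity) N
    _ = _ := by ring

lemma WeightedBound.expSemigroup_apply_of_add_smul {L : V →L[ℝ] V} {c κ K t : ℝ} {v : V}
    (hρ : ∀ i, Continuous (ρ i)) (hw : ∀ i, 0 ≤ w i)
    (step : ∀ (u : V) (C : ℝ), 0 ≤ C → WeightedBound ρ w C u →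
      WeightedBound ρ w (κ * C) (L u + c • u))
    (hκ : 0 ≤ κ) (hK : 0 ≤ K) (hv : WeightedBound ρ w K v) (ht : 0 ≤ t) :
    WeightedBound ρ w (Real.exp (t * (κ - c)) * K) (expSemigroup L t v) := by
  intro i
  have hshift : Real.exp (t * c) * ρ i (expSemigroup L t v) ≤
      Real.exp (t * κ) * K * w i := by
    have h := hv.expSemigroup_apply (T := L + c • 1) hρ hw step hκ hK ht i
    rwa [expSemigroup_add_smul_one, smul_apply, map_smul_eq_mul,
      Real.norm_of_nonneg (Real.exp_pos _).le] at h
  refine le_of_mul_le_mul_left (hshift.trans_eq ?_) (Real.exp_pos (t * c))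
  rw [mul_sub, Real.exp_sub]
  field_simp

end SemigroupBounds

section Calculus

variable {V W : Type*} [NormedAddCommGroup V] [NormedSpace ℝ V]
  [NormedAddCommGroup W] [NormedSpace ℝ W]

/- The curve of operators is only differentiable at the vector `g x`, so the usual product rule
does not apply; uniform boundedness controls the remainder. -/
lemma hasDerivWithinAt_apply_of_norm_le {T : ℝ → V →L[ℝ] W} {g : ℝ → V} {g' : V} {T' : W}
    {s : Set ℝ} {x C : ℝ} (hC : ∀ u, ‖T u‖ ≤ C)
    (hcont : ContinuousWithinAt (fun u => T u g') s x)
    (hT : HasDerivWithinAt (fun u => T u (g x)) T' s x) (hg : HasDerivWithinAt g g' s x) :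
    HasDerivWithinAt (fun u => T u (g u)) (T' + T x g') s x := by
  rw [hasDerivWithinAt_iff_isLittleO] at hT hg ⊢
  have hremainder : (fun u => T u (g u - g x - (u - x) • g')) =o[𝓝[s] x] fun u => u - x := by
    refine Asymptotics.IsBigO.trans_isLittleO (.of_bound C (.of_forall fun u => ?_)) hg
    exact (T u).le_of_opNorm_le (hC u) _
  have hdrift : (fun u => (u - x) • (T u g' - T x g')) =o[𝓝[s] x] fun u => u - x := by
    have h0 : (fun u => T u g' - T x g') =o[𝓝[s] x] fun _ => (1 : ℝ) := by
      rw [Asymptotics.isLittleO_one_iff]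
      simpa using hcont.sub_const (T x g')
    simpa using (Asymptotics.isBigO_refl (fun u => u - x) (𝓝[s] x)).smul_isLittleO h0
  refine ((hT.add hremainder).add hdrift).congr_left fun u => ?_
  simp only [map_sub, map_smul, smul_sub, smul_add]
  abel

variable [CompleteSpace V]

lemma hasDerivAt_expSemigroup_sub (L : V →L[ℝ] V) (v : V) (t s : ℝ) :
    HasDerivAt (fun u : ℝ => expSemigroup L (t - u) v)
      (-(L (expSemigroup L (t - s) v))) s := by
  have h := (hasDerivAt_exp_smul_const' (𝕂 := ℝ) L (t - s)).scomp s
    ((hasDerivAt_id s).const_sub t)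
  simpa [Function.comp_def, expSemigroup] using
    ((ContinuousLinearMap.apply ℝ V v).hasFDerivAt).comp_hasDerivAt s h

end Calculus

section Expectation

variable {X : Type*} [TopologicalSpace X] [CompactSpace X] [MeasurableSpace X] [BorelSpace X]

lemma integrable_continuousMap (m : Measure X) [IsFiniteMeasure m] (f : C(X, ℝ)) :
    Integrable f m :=
  f.continuous.integrable_of_hasCompactSupport (HasCompactSupport.of_compactSpace f)

/-- Expectation of a continuous observable on a compact space, as a continuous functional. -/
def expect (m : Measure X) [IsProbabilityMeasure m] : C(X, ℝ) →L[ℝ] ℝ :=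
  LinearMap.mkContinuous
    { toFun := fun f => ∫ x, f x ∂m
      map_add' := fun f g => integral_add (integrable_continuousMap m f)
        (integrable_continuousMap m g)
      map_smul' := fun c f => integral_const_mul c f }
    1 fun f => by
      simpa using norm_integral_le_of_norm_le_const (μ := m) (.of_forall f.norm_coe_le_norm)

variable (m : Measure X) [IsProbabilityMeasure m]

lemma expect_apply (f : C(X, ℝ)) : expect m f = ∫ x, f x ∂m := rfl

lemma norm_expect_le : ‖expect m‖ ≤ 1 :=
  LinearMap.mkContinuous_norm_le _ zero_le_one _

lemma abs_expect_le (f : C(X, ℝ)) : |expect m f| ≤ ‖f‖ := by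
  simpa using (expect m).le_of_opNorm_le (norm_expect_le m) f

lemma expect_mono {f g : C(X, ℝ)} (h : ∀ x, f x ≤ g x) : expect m f ≤ expect m g :=
  integral_mono (integrable_continuousMap m f) (integrable_continuousMap m g) h

lemma expect_const (c : ℝ) : expect m (ContinuousMap.const X c) = c := by
  simp [expect_apply]

end Expectation

/-- Continuous observables on the configuration space. -/
abbrev Observable : Type := C(Config, ℝ)

/-- Composition with a continuous self-map, as an operator on observables. -/
def pullback (φ : C(Config, Config)) : Observable →L[ℝ] Observable where
  toLinearMap := (ContinuousMap.compRightAlgHom ℝ ℝ φ).toLinearMap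
  cont := ContinuousMap.continuous_precomp φ

@[simp] lemma pullback_apply (φ : C(Config, Config)) (f : Observable) (ω : Config) :
    pullback φ f ω = f (φ ω) := rfl

lemma norm_pullback_apply_le (φ : C(Config, Config)) (f : Observable) :
    ‖pullback φ f‖ ≤ ‖f‖ :=
  (ContinuousMap.norm_le _ (norm_nonneg _)).2 fun ω => f.norm_coe_le_norm (φ ω)

/-- The map forcing the value `b` at the site `x`. -/
def setSite (x : ℤ) (b : Bool) : C(Config, Config) :=
  ⟨fun ω => Function.update ω x b, by fun_prop⟩

/-- Resampling of the site `x` from the Bernoulli(`p`) law. -/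
def siteAverage (p : ℝ) (x : ℤ) : Observable →L[ℝ] Observable :=
  p • pullback (setSite x true) + (1 - p) • pullback (setSite x false)

lemma siteAverage_apply (p : ℝ) (x : ℤ) (f : Observable) (ω : Config) :
    siteAverage p x f ω =
      p * f (Function.update ω x true) + (1 - p) * f (Function.update ω x false) := rfl

/-- The kinetic constraint of the East model: the indicator that the right neighbour of `x` is
empty. -/
def constraint (x : ℤ) : Observable :=
  ⟨fun ω => if ω (x + 1) = false then 1 else 0,
    (continuous_of_discreteTopology (f := fun b : Bool => if b = false then (1 : ℝ) else 0)).comp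
      (continuous_apply (x + 1))⟩

lemma constraint_apply (x : ℤ) (ω : Config) :
    constraint x ω = if ω (x + 1) = false then 1 else 0 := rfl

lemma constraint_nonneg (x : ℤ) (ω : Config) : 0 ≤ constraint x ω := by
  rw [constraint_apply]; split_ifs <;> norm_num

lemma constraint_le_one (x : ℤ) (ω : Config) : constraint x ω ≤ 1 := by
  rw [constraint_apply]; split_ifs <;> norm_num

/-- Resampling of each site `x ∈ Λ` at the configuration-dependent rate `c x`. -/
def weightedGen (p : ℝ) (c : ℤ → Observable) (Λ : Finset ℤ) : Observable →L[ℝ] Observable :=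
  ∑ x ∈ Λ, (ContinuousLinearMap.mul ℝ Observable (c x)).comp (siteAverage p x - 1)

lemma weightedGen_eq_sum (p : ℝ) (c : ℤ → Observable) (Λ : Finset ℤ) (f : Observable) :
    weightedGen p c Λ f = ∑ x ∈ Λ, c x * (siteAverage p x f - f) := by
  simp [weightedGen, mul_sub]

/-- The East generator restricted to the updates of the sites of `Λ`. -/
def finiteGen (p : ℝ) (Λ : Finset ℤ) : Observable →L[ℝ] Observable :=
  weightedGen p constraint Λ

lemma finiteGen_eq_sum (p : ℝ) (Λ : Finset ℤ) (f : Observable) :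
    finiteGen p Λ f = ∑ x ∈ Λ, constraint x * (siteAverage p x f - f) :=
  weightedGen_eq_sum p constraint Λ f

lemma finiteGen_apply (p : ℝ) (Λ : Finset ℤ) (f : Observable) (ω : Config) :
    finiteGen p Λ f ω = ∑ x ∈ Λ, constraint x ω * (siteAverage p x f ω - f ω) := by
  simp [finiteGen_eq_sum, ContinuousMap.sum_apply]

/-- The semigroup generated by the bounded operator `finiteGen p Λ`. -/
def finiteSemigroup (p : ℝ) (Λ : Finset ℤ) (t : ℝ) : Observable →L[ℝ] Observable :=
  expSemigroup (finiteGen p Λ) t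

lemma finiteSemigroup_zero (p : ℝ) (Λ : Finset ℤ) (f : Observable) :
    finiteSemigroup p Λ 0 f = f := by
  simp [finiteSemigroup, expSemigroup_zero]

/-- The transition operator of an update attempt at `x`: resample if the constraint holds, do
nothing otherwise. -/
def heatBath (p : ℝ) (x : ℤ) (f : Observable) : Observable :=
  constraint x * (siteAverage p x f - f) + f

lemma heatBath_apply (p : ℝ) (x : ℤ) (f : Observable) (ω : Config) :
    heatBath p x f ω = if ω (x + 1) = false then siteAverage p x f ω else f ω := by
  simp only [heatBath, ContinuousMap.add_apply, ContinuousMap.mul_apply, constraint_apply,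
    ContinuousMap.sub_apply]
  split_ifs <;> ring

lemma finiteGen_add_smul (p : ℝ) (Λ : Finset ℤ) (f : Observable) :
    finiteGen p Λ f + (Λ.card : ℝ) • f = ∑ x ∈ Λ, heatBath p x f := by
  rw [finiteGen_eq_sum, Nat.cast_smul_eq_nsmul, ← Finset.sum_const, ← Finset.sum_add_distrib]
  rfl

/-! ### Locality -/

section Locality

variable {f : Observable} {S T : Set ℤ}

lemma dependsOnF_mono {g : Config → ℝ} (h : DependsOnF g S) (hST : S ⊆ T) : DependsOnF g T :=
  fun ω ω' hω => h ω ω' fun x hx => hω x (hST hx)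

lemma apply_update_of_dependsOnF {g : Config → ℝ} (h : DependsOnF g S) {x : ℤ} (hx : x ∉ S)
    (ω : Config) (b : Bool) : g (Function.update ω x b) = g ω :=
  h _ _ fun _ hz => Function.update_of_ne (ne_of_mem_of_not_mem hz hx) _ _

lemma dependsOnF_siteAverage (p : ℝ) (x : ℤ) (h : DependsOnF f S) :
    DependsOnF (siteAverage p x f) (S \ {x}) := by
  intro ω ω' hω
  have hupdate (b : Bool) : f (Function.update ω x b) = f (Function.update ω' x b) := by
    refine h _ _ fun z hz => ?_
    by_cases hzx : z = x
    · simp [hzx]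
    · simpa [hzx] using hω z ⟨hz, hzx⟩
  simp only [siteAverage_apply, hupdate]

lemma siteAverage_eq_self (p : ℝ) (h : DependsOnF f S) {x : ℤ} (hx : x ∉ S) :
    siteAverage p x f = f := by
  ext ω
  rw [siteAverage_apply, apply_update_of_dependsOnF h hx, apply_update_of_dependsOnF h hx]
  ring

lemma dependsOnF_constraint (x : ℤ) : DependsOnF (constraint x) {x + 1} := by
  intro ω ω' hω
  rw [constraint_apply, constraint_apply, hω (x + 1) rfl]

lemma dependsOnF_heatBath (p : ℝ) {x : ℤ} (h : DependsOnF f S) (hx : x + 1 ∈ S) :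
    DependsOnF (heatBath p x f) S := by
  intro ω ω' hω
  rw [heatBath_apply, heatBath_apply, h ω ω' hω, hω _ hx,
    dependsOnF_mono (dependsOnF_siteAverage p x h) Set.sdiff_subset ω ω' hω]

end Locality

/-! ### A priori bounds on the finite-volume semigroup -/

/-- The absolute value of a continuous functional, as a seminorm. -/
def absSeminorm (φ : Observable →L[ℝ] ℝ) : Seminorm ℝ Observable :=
  (normSeminorm ℝ ℝ).comp φ.toLinearMap

lemma absSeminorm_apply (φ : Observable →L[ℝ] ℝ) (f : Observable) : absSeminorm φ f = |φ f| := rfl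

lemma continuous_absSeminorm (φ : Observable →L[ℝ] ℝ) : Continuous (absSeminorm φ) :=
  φ.continuous.abs

lemma exp_sub_le_three_mul_exp_sub_succ (m : ℝ) (x : ℤ) :
    Real.exp (m - x) ≤ 3 * Real.exp (m - (x + 1 : ℤ)) := by
  have hexp : m - x = 1 + (m - (x + 1 : ℤ)) := by push_cast; ring
  rw [hexp, Real.exp_add]
  gcongr
  exact Real.exp_one_lt_three.le

section FiniteSemigroup

variable {p K κ t : ℝ} {Λ : Finset ℤ} {f : Observable}

/- Each functional `φ i` may be amplified by the update of one single site; every other update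
preserves the bound. -/
lemma abs_finiteSemigroup_le {ι : Type*} (φ : ι → Observable →L[ℝ] ℝ) (w : ι → ℝ) (site : ι → ℤ)
    (hw : ∀ i, 0 ≤ w i) (hκ : 0 ≤ κ)
    (step : ∀ (g : Observable) (C : ℝ), 0 ≤ C → (∀ i, |φ i g| ≤ C * w i) → ∀ i, ∀ x ∈ Λ,
      |φ i (heatBath p x g)| ≤ (1 + if x = site i then κ else 0) * (C * w i))
    (hK : 0 ≤ K) (hf : ∀ i, |φ i f| ≤ K * w i) (ht : 0 ≤ t) (i : ι) :
    |φ i (finiteSemigroup p Λ t f)| ≤ Real.exp (κ * t) * K * w i := by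
  have hstep : ∀ (g : Observable) (C : ℝ), 0 ≤ C →
      WeightedBound (fun i => absSeminorm (φ i)) w C g →
      WeightedBound (fun i => absSeminorm (φ i)) w ((Λ.card + κ) * C)
        (finiteGen p Λ g + (Λ.card : ℝ) • g) := by
    intro g C hC hg i
    have hCw : 0 ≤ C * w i := mul_nonneg hC (hw i)
    rw [finiteGen_add_smul, absSeminorm_apply, map_sum]
    calc |∑ x ∈ Λ, φ i (heatBath p x g)|
        ≤ ∑ x ∈ Λ, (1 + if x = site i then κ else 0) * (C * w i) :=
          (Finset.abs_sum_le_sum_abs _ _).trans (Finset.sum_le_sum (step g C hC hg i))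
      _ = (Λ.card + if site i ∈ Λ then κ else 0) * (C * w i) := by
          rw [← Finset.sum_mul, Finset.sum_add_distrib, Finset.sum_ite_eq']
          simp
      _ ≤ (Λ.card + κ) * (C * w i) := by gcongr; split_ifs <;> simp [hκ]
      _ = _ := by ring
  have h := WeightedBound.expSemigroup_apply_of_add_smul (ρ := fun i => absSeminorm (φ i)) (w := w)
    (fun i => continuous_absSeminorm (φ i)) hw hstep (by positivity) hK hf ht i
  rw [add_sub_cancel_left, mul_comm t κ] at h
  exact h

lemma dependsOnF_finiteSemigroup {S : Set ℤ} (p : ℝ) (h : DependsOnF f S)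
    (hΛ : ∀ x ∈ Λ, x + 1 ∈ S) (ht : 0 ≤ t) : DependsOnF (finiteSemigroup p Λ t f) S := by
  intro ω ω' hω
  have hbound := abs_finiteSemigroup_le (Λ := Λ) (p := p) (f := f) (κ := 0) (K := 0)
    (fun i : {q : Config × Config // ∀ x ∈ S, q.1 x = q.2 x} =>
      ContinuousMap.evalCLM ℝ i.1.1 - ContinuousMap.evalCLM ℝ i.1.2) (fun _ => 0) (fun _ => 0)
    (fun _ => le_rfl) le_rfl
    (by
      rintro g C - hg ⟨⟨η, η'⟩, hη⟩ x hx
      have hgS : DependsOnF g S := fun η η' hη => by simpa [sub_eq_zero] using hg ⟨⟨η, η'⟩, hη⟩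
      simp [dependsOnF_heatBath p hgS (hΛ x hx) η η' hη])
    le_rfl (by rintro ⟨⟨η, η'⟩, hη⟩; simp [h η η' hη]) ht ⟨⟨ω, ω'⟩, hω⟩
  simpa [sub_eq_zero] using hbound

lemma abs_siteAverage_le (hp0 : 0 ≤ p) (hp1 : p ≤ 1) {x : ℤ} {ω : Config}
    (h : ∀ b, |f (Function.update ω x b)| ≤ K) :
    |siteAverage p x f ω| ≤ K := by
  rw [siteAverage_apply]
  have h1 := abs_le.1 (h true)
  have h2 := abs_le.1 (h false)
  rw [abs_le]; constructor <;> nlinarith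

lemma abs_siteAverage_sub_le (hp0 : 0 ≤ p) (hp1 : p ≤ 1) {x : ℤ} {ω : Config}
    (h : ∀ b, |f (Function.update ω x b) - f ω| ≤ K) : |siteAverage p x f ω - f ω| ≤ K := by
  rw [siteAverage_apply]
  have h1 := abs_le.1 (h true)
  have h2 := abs_le.1 (h false)
  rw [abs_le]; constructor <;> nlinarith

lemma norm_siteAverage_apply_le (hp0 : 0 ≤ p) (hp1 : p ≤ 1) (x : ℤ) (f : Observable) :
    ‖siteAverage p x f‖ ≤ ‖f‖ :=
  (ContinuousMap.norm_le _ (norm_nonneg _)).2 fun _ =>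
    abs_siteAverage_le hp0 hp1 fun _ => f.norm_coe_le_norm _

lemma abs_siteAverage_update_sub_le (hp0 : 0 ≤ p) (hp1 : p ≤ 1) {x z : ℤ} {b : Bool}
    (hK : 0 ≤ K)
    (h : ∀ ω, |f (Function.update ω z b) - f ω| ≤ K) (ω : Config) :
    |siteAverage p x f (Function.update ω z b) - siteAverage p x f ω| ≤ K := by
  rcases eq_or_ne z x with rfl | hzx
  · simpa [siteAverage_apply] using hK
  · have h1 := abs_le.1 (h (Function.update ω x true))
    have h2 := abs_le.1 (h (Function.update ω x false))
    simp only [siteAverage_apply, Function.update_comm hzx]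
    rw [abs_le]; constructor <;> nlinarith

lemma abs_heatBath_update_sub_le_of_ne (hp0 : 0 ≤ p) (hp1 : p ≤ 1) {x z : ℤ} {b : Bool}
    (hK : 0 ≤ K)
    (h : ∀ ω, |f (Function.update ω z b) - f ω| ≤ K) (hxz : x + 1 ≠ z) (ω : Config) :
    |heatBath p x f (Function.update ω z b) - heatBath p x f ω| ≤ K := by
  rw [heatBath_apply, heatBath_apply, Function.update_of_ne hxz]
  split_ifs
  · exact abs_siteAverage_update_sub_le hp0 hp1 hK h ω
  · exact h ω

lemma abs_heatBath_update_sub_le (hp0 : 0 ≤ p) (hp1 : p ≤ 1) {x z : ℤ} {b : Bool}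
    {K' : ℝ} (hK : 0 ≤ K)
    (h : ∀ ω, |f (Function.update ω z b) - f ω| ≤ K)
    (h' : ∀ ω c, |f (Function.update ω x c) - f ω| ≤ K') (ω : Config) :
    |heatBath p x f (Function.update ω z b) - heatBath p x f ω| ≤ K + K' := by
  have hav := abs_le.1 (abs_siteAverage_update_sub_le hp0 hp1 (x := x) hK h ω)
  have hsub := abs_le.1 (abs_siteAverage_sub_le hp0 hp1 (h' ω))
  have hz := abs_le.1 (h ω)
  rw [heatBath_apply, heatBath_apply, abs_le]
  split_ifs <;> constructor <;> linarith

/- The generator propagates the sensitivity of an observable only one site to the right at a time,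
at the cost of a factor `e ≤ 3`. -/
lemma abs_finiteSemigroup_update_sub_le (hp0 : 0 ≤ p) (hp1 : p ≤ 1) (m : ℝ) {Z : Set ℤ}
    (hK : 0 ≤ K)
    (hZ : ∀ x ∈ Λ, x + 1 ∈ Z → x ∈ Z)
    (hf : ∀ z ∈ Z, ∀ ω b, |f (Function.update ω z b) - f ω| ≤ K * Real.exp (m - z))
    (ht : 0 ≤ t) {z : ℤ} (hz : z ∈ Z) (ω : Config) (b : Bool) :
    |finiteSemigroup p Λ t f (Function.update ω z b) - finiteSemigroup p Λ t f ω| ≤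
      Real.exp (3 * t) * K * Real.exp (m - z) := by
  refine abs_finiteSemigroup_le (fun i : Z × Config × Bool =>
      ContinuousMap.evalCLM ℝ (Function.update i.2.1 i.1.1 i.2.2) - ContinuousMap.evalCLM ℝ i.2.1)
    (fun i => Real.exp (m - i.1.1)) (fun i => i.1.1 - 1) (fun _ => (Real.exp_pos _).le)
    zero_le_three ?_ hK (fun i => hf i.1.1 i.1.2 i.2.1 i.2.2) ht ⟨⟨z, hz⟩, ω, b⟩
  rintro g C hC hg ⟨⟨z, hz⟩, ω, b⟩ x hx
  have hgrad (y : ℤ) (hy : y ∈ Z) (η : Config) (c : Bool) :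
      |g (Function.update η y c) - g η| ≤ C * Real.exp (m - y) := hg ⟨⟨y, hy⟩, η, c⟩
  have hKz : 0 ≤ C * Real.exp (m - z) := by positivity
  change |heatBath p x g (Function.update ω z b) - heatBath p x g ω| ≤
    (1 + if x = z - 1 then 3 else 0) * (C * Real.exp (m - z))
  split_ifs with hxz
  · obtain rfl : z = x + 1 := by omega
    refine (abs_heatBath_update_sub_le hp0 hp1 hKz (hgrad _ hz · b)
      (hgrad x (hZ x hx hz)) ω).trans ?_
    have := mul_le_mul_of_nonneg_left (exp_sub_le_three_mul_exp_sub_succ m x) hC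
    linarith
  · rw [add_zero, one_mul]
    exact abs_heatBath_update_sub_le_of_ne hp0 hp1 hKz (hgrad z hz · b) (by omega) ω

lemma abs_heatBath_le (hp0 : 0 ≤ p) (hp1 : p ≤ 1) {g : Observable} {u x : ℤ} {ω : Config}
    {C m : ℝ} (hC : 0 ≤ C)
    (hg : ∀ (v : ℤ) (η : Config), (∀ z < v, η z = true) → |g η| ≤ C * Real.exp (m - v))
    (hω : ∀ z < u, ω z = true) :
    |heatBath p x g ω| ≤ (1 + if x = u - 1 then 3 else 0) * (C * Real.exp (m - u)) := by
  have hCu : 0 ≤ C * Real.exp (m - u) := by positivity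
  have hupdate (v : ℤ) (hvu : v ≤ u) (hvx : v ≤ x) :
      |siteAverage p x g ω| ≤ C * Real.exp (m - v) :=
    abs_siteAverage_le hp0 hp1 fun b => hg v _ fun z hz => by
      rw [Function.update_of_ne (by omega), hω z (by omega)]
  rw [heatBath_apply]
  split_ifs with hempty hxu hxu
  · obtain rfl : u = x + 1 := by omega
    have := mul_le_mul_of_nonneg_left (exp_sub_le_three_mul_exp_sub_succ m x) hC
    linarith [hupdate x (by omega) le_rfl]
  · have hux : u ≤ x := by
      by_contra hlt
      exact absurd hempty (by simp [hω (x + 1) (by omega)])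
    linarith [hupdate u le_rfl hux]
  · linarith [hg u ω hω]
  · linarith [hg u ω hω]

lemma abs_finiteSemigroup_le_of_ones (hp0 : 0 ≤ p) (hp1 : p ≤ 1) (Λ : Finset ℤ) (m : ℝ)
    (hf : ∀ (u : ℤ) (ω : Config), (∀ z < u, ω z = true) → |f ω| ≤ Real.exp (m - u))
    (ht : 0 ≤ t) {u : ℤ} {ω : Config} (hω : ∀ z < u, ω z = true) :
    |finiteSemigroup p Λ t f ω| ≤ Real.exp (3 * t) * Real.exp (m - u) := by
  have h := abs_finiteSemigroup_le (κ := 3) (p := p) (Λ := Λ)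
    (fun i : {q : ℤ × Config // ∀ z < q.1, q.2 z = true} => ContinuousMap.evalCLM ℝ i.1.2)
    (fun i => Real.exp (m - i.1.1)) (fun i => i.1.1 - 1) (fun _ => (Real.exp_pos _).le)
    zero_le_three
    (fun g C hC hg i x _ => abs_heatBath_le hp0 hp1 hC (fun v η hη => hg ⟨⟨v, η⟩, hη⟩) i.2)
    zero_le_one (fun i => by simpa using hf i.1.1 i.1.2 i.2) ht ⟨⟨u, ω⟩, hω⟩
  simpa using h

end FiniteSemigroup

/-! ### Kolmogorov's forward equation and finite-volume approximation -/

instance (E : EastProcess) (t : ℝ) : IsMarkovKernel (E.P t) := E.markov t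

instance (E : EastProcess) : IsProbabilityMeasure E.μ := E.μprob

section Resolvent

variable (E : EastProcess) (h : Observable) (ω : Config)

lemma continuous_expect_time : Continuous fun t => expect (E.P t ω) h :=
  E.timeCont h h.continuous ω

lemma expect_zero_time : expect (E.P 0 ω) h = h ω := by
  rw [expect_apply, E.P0, Kernel.id_apply, integral_dirac]

/-- The Markov semigroup acting on observables. -/
def semigroupObservable {t : ℝ} (ht : 0 ≤ t) : Observable :=
  ⟨fun ω => expect (E.P t ω) h, E.feller t ht h h.continuous⟩

lemma expect_add_time {s t : ℝ} (hs : 0 ≤ s) (ht : 0 ≤ t) :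
    expect (E.P (t + s) ω) h = expect (E.P t ω) (semigroupObservable E h hs) := by
  have : IsMarkovKernel ((E.P s).comp (E.P t)) := E.semigroup s t hs ht ▸ E.markov _
  simp only [expect_apply, E.semigroup s t hs ht]
  exact Kernel.integral_comp (integrable_continuousMap _ h)

lemma measurable_uncurry_expect :
    Measurable (Function.uncurry fun (t : ℝ) (ω : Config) => expect (E.P t ω) h) :=
  measurable_uncurry_of_continuous_of_measurable (fun ω => continuous_expect_time E h ω)
    fun t => (h.continuous.measurable.stronglyMeasurable.integral_kernel (κ := E.P t)).measurable

lemma norm_exp_neg_mul_expect_le (s : ℝ) :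
    ‖Real.exp (-s) * expect (E.P s ω) h‖ ≤ ‖h‖ * Real.exp (-s) := by
  rw [norm_mul, Real.norm_of_nonneg (Real.exp_pos _).le, mul_comm]
  gcongr
  exact abs_expect_le _ h

lemma continuous_exp_neg_mul_expect : Continuous fun s => Real.exp (-s) * expect (E.P s ω) h :=
  (Real.continuous_exp.comp continuous_neg).mul (continuous_expect_time E h ω)

lemma integrableOn_exp_neg_mul_expect (c : ℝ) :
    IntegrableOn (fun s => Real.exp (-s) * expect (E.P s ω) h) (Set.Ioi c) :=
  ((integrableOn_exp_neg_Ioi c).const_mul ‖h‖).mono'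
    (continuous_exp_neg_mul_expect E h ω).aestronglyMeasurable
    (.of_forall (norm_exp_neg_mul_expect_le E h ω))

/-- The resolvent of the semigroup at parameter `1`. -/
def resolvent : Observable where
  toFun ω := ∫ s in Set.Ioi (0 : ℝ), Real.exp (-s) * expect (E.P s ω) h
  continuous_toFun := by
    refine continuous_of_dominated (bound := fun s => ‖h‖ * Real.exp (-s))
      (fun ω => (integrableOn_exp_neg_mul_expect E h ω 0).aestronglyMeasurable)
      (fun ω => .of_forall (norm_exp_neg_mul_expect_le E h ω))
      ((integrableOn_exp_neg_Ioi 0).const_mul ‖h‖) ?_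
    refine (ae_restrict_iff' measurableSet_Ioi).2 (.of_forall fun s hs => ?_)
    exact continuous_const.mul (E.feller s (le_of_lt hs) h h.continuous)

lemma resolvent_apply :
    resolvent E h ω = ∫ s in Set.Ioi (0 : ℝ), Real.exp (-s) * expect (E.P s ω) h := rfl

lemma expect_resolvent_eq_integral (m : Measure Config) [IsProbabilityMeasure m] :
    expect m (resolvent E h) =
      ∫ s in Set.Ioi (0 : ℝ), ∫ η, Real.exp (-s) * expect (E.P s η) h ∂m := by
  refine integral_integral_swap ?_
  have hmeas : Measurable (Function.uncurry
      fun (η : Config) (s : ℝ) => Real.exp (-s) * expect (E.P s η) h) :=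
    (by fun_prop : Measurable fun q : Config × ℝ => Real.exp (-q.2)).mul
      ((measurable_uncurry_expect E h).comp measurable_swap)
  have hbound : Integrable (fun q : Config × ℝ => ‖h‖ * Real.exp (-q.2))
      (m.prod (volume.restrict (Set.Ioi 0))) :=
    (integrable_const ‖h‖).mul_prod (integrableOn_exp_neg_Ioi 0)
  exact hbound.mono' hmeas.aestronglyMeasurable
    (.of_forall fun q => norm_exp_neg_mul_expect_le E h q.1 q.2)

lemma expect_resolvent {u : ℝ} (hu : 0 ≤ u) :
    expect (E.P u ω) (resolvent E h) =
      Real.exp u * (resolvent E h ω - ∫ s in (0 : ℝ)..u, Real.exp (-s) * expect (E.P s ω) h) := by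
  have hinner : ∀ s ∈ Set.Ioi (0 : ℝ), (∫ η, Real.exp (-s) * expect (E.P s η) h ∂(E.P u ω)) =
      Real.exp u * (Real.exp (-(s + u)) * expect (E.P (s + u) ω) h) := by
    intro s hs
    rw [integral_const_mul, ← mul_assoc, ← Real.exp_add, neg_add_rev, add_neg_cancel_left]
    simp only [add_comm s u, expect_add_time E h ω (le_of_lt hs) hu]
    rfl
  have htranslate := (measurePreserving_add_right (volume : Measure ℝ) u).setIntegral_preimage_emb
    (MeasurableEquiv.addRight u).measurableEmbedding
    (fun s => Real.exp (-s) * expect (E.P s ω) h) (Set.Ioi u)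
  rw [Set.preimage_add_const_Ioi, sub_self] at htranslate
  rw [expect_resolvent_eq_integral, setIntegral_congr_fun measurableSet_Ioi hinner,
    integral_const_mul, htranslate, resolvent_apply, eq_sub_of_add_eq'
      (intervalIntegral.integral_interval_add_Ioi (integrableOn_exp_neg_mul_expect E h ω 0)
        (integrableOn_exp_neg_mul_expect E h ω u))]

lemma hasDerivWithinAt_expect_resolvent {u : ℝ} (hu : 0 ≤ u) :
    HasDerivWithinAt (fun u => expect (E.P u ω) (resolvent E h))
      (expect (E.P u ω) (resolvent E h - h)) (Set.Ici 0) u := by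
  have hint : HasDerivAt (fun u => ∫ s in (0 : ℝ)..u, Real.exp (-s) * expect (E.P s ω) h)
      (Real.exp (-u) * expect (E.P u ω) h) u :=
    ((continuous_exp_neg_mul_expect E h ω).integral_hasStrictDerivAt 0 u).hasDerivAt
  have hprod := ((Real.hasDerivAt_exp u).mul
    (hint.const_sub (resolvent E h ω))).hasDerivWithinAt.congr_of_mem (s := Set.Ici 0)
    (fun v hv => expect_resolvent E h ω hv) hu
  refine hprod.congr_deriv ?_
  rw [map_sub, expect_resolvent E h ω hu, mul_neg, ← mul_assoc, ← Real.exp_add, add_neg_cancel,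
    Real.exp_zero, one_mul, ← sub_eq_add_neg]

end Resolvent

section ForwardEquation

variable {E : EastProcess} {f g : Observable}

/-- `g` is the image of `f` under the infinitesimal generator, in the pointwise sense. -/
def HasGenerator (E : EastProcess) (f g : Observable) : Prop :=
  ∀ ω, HasDerivWithinAt (fun u : ℝ => expect (E.P u ω) f) (g ω) (Set.Ici 0) 0

lemma HasGenerator.sub {f' g' : Observable} (h : HasGenerator E f g) (h' : HasGenerator E f' g') :
    HasGenerator E (f - f') (g - g') := fun ω =>
  ((h ω).sub (h' ω)).congr_of_mem (fun _ _ => map_sub _ _ _) Set.self_mem_Ici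

lemma HasGenerator.neg (h : HasGenerator E f g) : HasGenerator E (-f) (-g) := fun ω =>
  (h ω).neg.congr_of_mem (fun _ _ => map_neg _ _) Set.self_mem_Ici

lemma hasGenerator_resolvent (E : EastProcess) (h : Observable) :
    HasGenerator E (resolvent E h) (resolvent E h - h) := fun ω => by
  simpa only [expect_zero_time] using hasDerivWithinAt_expect_resolvent E h ω le_rfl

lemma HasGenerator.nonpos_of_forall_le (h : HasGenerator E f g) {ω : Config}
    (hmax : ∀ η, f η ≤ f ω) : g ω ≤ 0 := by
  have hslope := h ω
  rw [hasDerivWithinAt_iff_tendsto_slope, Set.Ici_sdiff_left] at hslope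
  refine le_of_tendsto hslope ?_
  filter_upwards [self_mem_nhdsWithin] with u hu
  have hle : expect (E.P u ω) f ≤ f ω :=
    (expect_mono _ (g := ContinuousMap.const Config (f ω)) hmax).trans (expect_const _ _).le
  rw [slope_def_field, expect_zero_time]
  exact div_nonpos_of_nonpos_of_nonneg (sub_nonpos.2 hle) (sub_nonneg.2 (le_of_lt hu))

lemma HasGenerator.nonpos_of_self (h : HasGenerator E f f) (ω : Config) : f ω ≤ 0 := by
  obtain ⟨η, -, hη⟩ := isCompact_univ.exists_isMaxOn (Set.univ_nonempty (α := Config))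
    f.continuous.continuousOn
  have hmax : ∀ ω, f ω ≤ f η := fun ω => hη (Set.mem_univ ω)
  exact (hmax ω).trans (h.nonpos_of_forall_le hmax)

lemma HasGenerator.eq_resolvent (h : HasGenerator E f g) : f = resolvent E (f - g) := by
  have hself : HasGenerator E (f - resolvent E (f - g)) (f - resolvent E (f - g)) := by
    have hsub := h.sub (hasGenerator_resolvent E (f - g))
    rwa [show g - (resolvent E (f - g) - (f - g)) = f - resolvent E (f - g) by abel] at hsub
  ext ω
  refine sub_eq_zero.1 (le_antisymm (hself.nonpos_of_self ω) ?_)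
  exact neg_nonpos.1 (hself.neg.nonpos_of_self ω)

lemma HasGenerator.hasDerivWithinAt_expect (h : HasGenerator E f g) {u : ℝ} (hu : 0 ≤ u)
    (ω : Config) :
    HasDerivWithinAt (fun u => expect (E.P u ω) f) (expect (E.P u ω) g) (Set.Ici 0) u := by
  have hderiv := hasDerivWithinAt_expect_resolvent E (f - g) ω hu
  rwa [← h.eq_resolvent, sub_sub_cancel] at hderiv

lemma flipAt_eq_update (ω : Config) (x : ℤ) : flipAt ω x = Function.update ω x (!ω x) := by
  ext y
  by_cases h : y = x
  · subst h; simp [flipAt]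
  · simp [flipAt, h]

lemma flip_rate_mul_sub_eq (p : ℝ) (f : Observable) (x : ℤ) (ω : Config) :
    (if ω x = false then p else 1 - p) * (f (flipAt ω x) - f ω) = siteAverage p x f ω - f ω := by
  have hself := Function.update_eq_self x ω
  rw [siteAverage_apply, flipAt_eq_update]
  cases hx : ω x <;> rw [hx] at hself <;> simp [hself] <;> ring

lemma eastGen_eq_finiteGen (p : ℝ) {S : Finset ℤ} (hf : DependsOnF f S) (ω : Config) :
    eastGen p f ω = finiteGen p S f ω := by
  rw [eastGen, finiteGen_apply, tsum_eq_sum (s := S)]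
  · exact Finset.sum_congr rfl fun x _ => by
      rw [mul_assoc, flip_rate_mul_sub_eq, constraint_apply]
  · intro x hx
    rw [mul_assoc, flip_rate_mul_sub_eq, siteAverage_eq_self p hf (mod_cast hx), sub_self, mul_zero]

lemma hasGenerator_of_dependsOnF (E : EastProcess) {S : Finset ℤ} (hf : DependsOnF f S) :
    HasGenerator E f (finiteGen E.p S f) := fun ω => by
  rw [← eastGen_eq_finiteGen E.p hf]
  exact E.generator f ⟨S, hf⟩ ω

end ForwardEquation

section Comparison

variable (E : EastProcess) {f : Observable} {t : ℝ}

lemma finiteGen_sub_of_subset (p : ℝ) {Λ S : Finset ℤ} (h : Λ ⊆ S) (f : Observable) :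
    finiteGen p S f - finiteGen p Λ f = finiteGen p (S \ Λ) f := by
  simp only [finiteGen_eq_sum]
  rw [sub_eq_iff_eq_add, Finset.sum_sdiff h]

lemma hasDerivWithinAt_expect_finiteSemigroup {S Λ : Finset ℤ} (hf : DependsOnF f S) (hΛS : Λ ⊆ S)
    (hΛ : ∀ x ∈ Λ, x + 1 ∈ S) (ω : Config) {s : ℝ} (hs : s ∈ Set.Icc 0 t) :
    HasDerivWithinAt (fun s => expect (E.P s ω) (finiteSemigroup E.p Λ (t - s) f))
      (expect (E.P s ω) (finiteGen E.p (S \ Λ) (finiteSemigroup E.p Λ (t - s) f)))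
      (Set.Icc 0 t) s := by
  have hloc : DependsOnF (finiteSemigroup E.p Λ (t - s) f) S :=
    dependsOnF_finiteSemigroup E.p hf hΛ (sub_nonneg.2 hs.2)
  have hderiv := hasDerivWithinAt_apply_of_norm_le (T := fun s => expect (E.P s ω)) (C := 1)
    (s := Set.Icc 0 t)
    (fun _ => norm_expect_le _) (continuous_expect_time E _ ω).continuousWithinAt
    (((hasGenerator_of_dependsOnF E hloc).hasDerivWithinAt_expect hs.1 ω).mono
      Set.Icc_subset_Ici_self)
    (hasDerivAt_expSemigroup_sub (finiteGen E.p Λ) f t s).hasDerivWithinAt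
  rwa [← map_add, ← sub_eq_add_neg, ← finiteSemigroup, finiteGen_sub_of_subset _ hΛS] at hderiv

lemma abs_expect_sub_finiteSemigroup_le {S Λ : Finset ℤ} (hf : DependsOnF f S) (hΛS : Λ ⊆ S)
    (hΛ : ∀ x ∈ Λ, x + 1 ∈ S) {η : ℝ} (ht : 0 ≤ t)
    (hη : ∀ r, 0 ≤ r → r ≤ t → ‖finiteGen E.p (S \ Λ) (finiteSemigroup E.p Λ r f)‖ ≤ η)
    (ω : Config) : |expect (E.P t ω) f - finiteSemigroup E.p Λ t f ω| ≤ η * t := by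
  have hmvt := (convex_Icc (0 : ℝ) t).norm_image_sub_le_of_norm_hasDerivWithin_le (C := η)
    (fun s hs => hasDerivWithinAt_expect_finiteSemigroup E hf hΛS hΛ ω hs)
    (fun s hs => (abs_expect_le _ _).trans
      (hη _ (sub_nonneg.2 hs.2) (sub_le_self t hs.1)))
    (Set.left_mem_Icc.2 ht) (Set.right_mem_Icc.2 ht)
  simpa only [sub_self, sub_zero, finiteSemigroup_zero, expect_zero_time, Real.norm_eq_abs,
    abs_of_nonneg ht] using hmvt

lemma abs_finiteGen_apply_le {p : ℝ} (hp0 : 0 ≤ p) (hp1 : p ≤ 1) {Λ : Finset ℤ} {B : ℤ → ℝ}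
    {ω : Config} (h : ∀ x ∈ Λ, ∀ b, |f (Function.update ω x b) - f ω| ≤ B x) :
    |finiteGen p Λ f ω| ≤ ∑ x ∈ Λ, B x := by
  rw [finiteGen_apply]
  refine (Finset.abs_sum_le_sum_abs _ _).trans (Finset.sum_le_sum fun x hx => ?_)
  rw [abs_mul, abs_of_nonneg (constraint_nonneg x ω)]
  exact (mul_le_of_le_one_left (abs_nonneg _) (constraint_le_one x ω)).trans
    (abs_siteAverage_sub_le hp0 hp1 (h x hx))

lemma abs_update_sub_le_exp {a b : ℤ} (hf : DependsOnF f (Set.Icc a b)) (hf1 : ‖f‖ ≤ 1) (z : ℤ)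
    (ω : Config) (c : Bool) :
    |f (Function.update ω z c) - f ω| ≤ 2 * Real.exp (b - z) := by
  rcases le_or_gt z b with hz | hz
  · have h1 := abs_le.1 ((f.norm_coe_le_norm ω).trans hf1)
    have h2 := abs_le.1 ((f.norm_coe_le_norm (Function.update ω z c)).trans hf1)
    have h3 : 1 ≤ Real.exp ((b : ℝ) - z) := Real.one_le_exp (sub_nonneg.2 (mod_cast hz))
    rw [abs_le]; constructor <;> linarith [h1.1, h1.2, h2.1, h2.2]
  · rw [apply_update_of_dependsOnF hf fun h => (h.2.trans_lt hz).false, sub_self, abs_zero]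
    positivity

/-- Freezing the site `m` costs little if `f` has small influences to the left of `m`, and
truncating at `N` costs little far to the right of the support of `f`. -/
lemma abs_expect_sub_finiteSemigroup_erase_le {a b m N : ℤ} (hf : DependsOnF f (Set.Icc a b))
    (hbN : b ≤ N) (hf1 : ‖f‖ ≤ 1) {K : ℝ} (hK : 0 ≤ K)
    (hm : ∀ z ≤ m, ∀ ω c, |f (Function.update ω z c) - f ω| ≤ K * Real.exp (m - z))
    (ht : 0 ≤ t) (ω : Config) :
    |expect (E.P t ω) f - finiteSemigroup E.p ((Finset.Icc a N).erase m) t f ω| ≤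
      Real.exp (3 * t) * (2 * Real.exp (b - (N + 1)) + K) * t := by
  set Λ := (Finset.Icc a N).erase m with hΛ
  have hmem {x : ℤ} : x ∈ Λ ↔ x ≠ m ∧ a ≤ x ∧ x ≤ N := by simp [hΛ]
  refine abs_expect_sub_finiteSemigroup_le E (S := Finset.Icc a (N + 1))
    (dependsOnF_mono hf fun x hx => ?_) (fun x hx => ?_) (fun x hx => ?_) ht
    (fun r hr hrt => (ContinuousMap.norm_le _ (by positivity)).2 fun η => ?_) ω
  · simp only [Finset.coe_Icc, Set.mem_Icc] at hx ⊢; omega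
  · rw [hmem] at hx; rw [Finset.mem_Icc]; omega
  · rw [hmem] at hx; rw [Finset.mem_Icc]; omega
  have hright (c : Bool) := abs_finiteSemigroup_update_sub_le E.hp0.le E.hp1.le (Λ := Λ) b
    zero_le_two (Z := Set.univ) (by simp) (fun z _ => abs_update_sub_le_exp hf hf1 z) hr
    (Set.mem_univ (N + 1)) η c
  have hfrozen (c : Bool) := abs_finiteSemigroup_update_sub_le E.hp0.le E.hp1.le (Λ := Λ) m hK
    (Z := Set.Iic m) (fun _ _ hxm => (Int.le_sub_one_of_lt (Int.lt_of_add_one_le hxm)).trans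
      (by omega)) hm hr Set.self_mem_Iic η c
  refine (abs_finiteGen_apply_le E.hp0.le E.hp1.le (B := fun x =>
    (if x = N + 1 then Real.exp (3 * t) * (2 * Real.exp (b - (N + 1))) else 0) +
      if x = m then Real.exp (3 * t) * K else 0) fun x hx c => ?_).trans ?_
  · have hx' : x = N + 1 ∨ x ≠ N + 1 ∧ x = m := by
      rw [Finset.mem_sdiff, hmem, Finset.mem_Icc] at hx; omega
    rcases hx' with rfl | ⟨hne, rfl⟩
    · refine (hright c).trans ((?_ : _ ≤ Real.exp (3 * t) * (2 * Real.exp (b - (N + 1)))).trans ?_)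
      · push_cast; rw [mul_assoc]; gcongr
      · rw [if_pos rfl]; exact le_add_of_nonneg_right (by split_ifs <;> positivity)
    · refine (hfrozen c).trans ?_
      rw [if_neg hne, if_pos rfl, sub_self, Real.exp_zero, mul_one, zero_add]
      gcongr
  · rw [Finset.sum_add_distrib, Finset.sum_ite_eq', Finset.sum_ite_eq', mul_add]
    gcongr <;> split_ifs <;> first | exact le_rfl | positivity

end Comparison

/-! ### The reversible measure and the Dirichlet form -/

/-- The set of configurations which agree with `σ` on `S`. -/
def cylinderSet (S : Finset ℤ) (σ : Config) : Set Config := {ω | ∀ x ∈ S, ω x = σ x}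

lemma measurableSet_cylinderSet (S : Finset ℤ) (σ : Config) : MeasurableSet (cylinderSet S σ) :=
  MeasurableSet.pi S.countable_toSet fun x _ => measurableSet_singleton (σ x)

lemma ext_of_cylinderSet {m m' : Measure Config} [IsFiniteMeasure m']
    (h : ∀ S σ, m (cylinderSet S σ) = m' (cylinderSet S σ)) : m = m' := by
  have hfin (I : Finset ℤ) : IsFiniteMeasure (m'.map (I.restrict (π := fun _ : ℤ => Bool))) :=
    inferInstance
  refine IsProjectiveLimit.unique (P := fun I : Finset ℤ => m'.map I.restrict) (fun I => ?_)
    fun I => rfl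
  refine Measure.ext_of_singleton fun τ => ?_
  have hpre : I.restrict (π := fun _ : ℤ => Bool) ⁻¹' {τ} =
      cylinderSet I (fun x => if hx : x ∈ I then τ ⟨x, hx⟩ else true) := by
    ext ω
    simp only [Set.mem_preimage, Set.mem_singleton_iff, cylinderSet, Set.mem_ofPred_eq]
    refine ⟨by rintro rfl x hx; simp [hx], fun h => ?_⟩
    ext ⟨x, hx⟩
    simpa [hx] using h x hx
  rw [Measure.map_apply (Finset.measurable_restrict I) (measurableSet_singleton _),
    Measure.map_apply (Finset.measurable_restrict I) (measurableSet_singleton _), hpre, h]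

lemma preimage_setSite_cylinderSet {S : Finset ℤ} {x : ℤ} (hx : x ∈ S) (σ : Config) :
    setSite x (σ x) ⁻¹' cylinderSet S σ = cylinderSet (S.erase x) σ := by
  ext ω
  refine ⟨fun h z hz => ?_, fun h z hz => ?_⟩
  · rw [Finset.mem_erase] at hz
    simpa [setSite, Function.update_of_ne hz.1] using h z hz.2
  · rcases eq_or_ne z x with rfl | hzx
    · simp [setSite]
    · simpa [setSite, Function.update_of_ne hzx] using h z (Finset.mem_erase.2 ⟨hzx, hz⟩)

lemma preimage_setSite_cylinderSet_of_ne {S : Finset ℤ} {x : ℤ} (hx : x ∈ S) {σ : Config} {b : Bool}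
    (hb : b ≠ σ x) : setSite x b ⁻¹' cylinderSet S σ = ∅ :=
  Set.eq_empty_of_forall_notMem fun ω hω => hb (by simpa [setSite] using hω x hx)

lemma preimage_setSite_cylinderSet_of_notMem {S : Finset ℤ} {x : ℤ} (hx : x ∉ S) (σ : Config)
    (b : Bool) : setSite x b ⁻¹' cylinderSet S σ = cylinderSet S σ := by
  ext ω
  refine forall₂_congr fun z hz => ?_
  simp [setSite, Function.update_of_ne (ne_of_mem_of_not_mem hz hx)]

variable (E : EastProcess)

lemma measure_cylinderSet (S : Finset ℤ) (σ : Config) :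
    E.μ (cylinderSet S σ) = ∏ x ∈ S, ENNReal.ofReal (if σ x then E.p else 1 - E.p) :=
  E.μprod S σ

lemma measure_eq_add_map_setSite (x : ℤ) :
    E.μ = ENNReal.ofReal E.p • E.μ.map (setSite x true) +
      ENNReal.ofReal (1 - E.p) • E.μ.map (setSite x false) := by
  have hmeas (b : Bool) : Measurable (setSite x b) := (setSite x b).continuous.measurable
  have hfin (r : ℝ) (b : Bool) : IsFiniteMeasure (ENNReal.ofReal r • E.μ.map (setSite x b)) :=
    Measure.smul_finite _ ENNReal.ofReal_ne_top
  refine ext_of_cylinderSet fun S σ => ?_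
  rw [Measure.add_apply, Measure.smul_apply, Measure.smul_apply, smul_eq_mul, smul_eq_mul,
    Measure.map_apply (hmeas _) (measurableSet_cylinderSet S σ),
    Measure.map_apply (hmeas _) (measurableSet_cylinderSet S σ)]
  by_cases hx : x ∈ S
  · have hmatch := preimage_setSite_cylinderSet hx σ
    rw [measure_cylinderSet, ← Finset.mul_prod_erase S _ hx, ← measure_cylinderSet]
    cases hσ : σ x <;> rw [hσ] at hmatch
    · simp [hmatch, preimage_setSite_cylinderSet_of_ne hx (σ := σ) (b := true) (by simp [hσ])]
    · simp [hmatch, preimage_setSite_cylinderSet_of_ne hx (σ := σ) (b := false) (by simp [hσ])]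
  · rw [preimage_setSite_cylinderSet_of_notMem hx, preimage_setSite_cylinderSet_of_notMem hx,
      ← add_mul, ← ENNReal.ofReal_add E.hp0.le (sub_nonneg.2 E.hp1.le), add_sub_cancel,
      ENNReal.ofReal_one, one_mul]

lemma expect_siteAverage (x : ℤ) (g : Observable) :
    expect E.μ (siteAverage E.p x g) = expect E.μ g := by
  have hmap (b : Bool) : ∫ ω, g ω ∂E.μ.map (setSite x b) =
      expect E.μ (pullback (setSite x b) g) :=
    integral_map (setSite x b).continuous.measurable.aemeasurable
      g.continuous.measurable.aestronglyMeasurable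
  have hfin (r : ℝ) (b : Bool) : IsFiniteMeasure (ENNReal.ofReal r • E.μ.map (setSite x b)) :=
    Measure.smul_finite _ ENNReal.ofReal_ne_top
  have hsplit := integral_add_measure (integrable_continuousMap (ENNReal.ofReal E.p •
    E.μ.map (setSite x true)) g) (integrable_continuousMap (ENNReal.ofReal (1 - E.p) •
    E.μ.map (setSite x false)) g)
  rw [← measure_eq_add_map_setSite, integral_smul_measure, integral_smul_measure, hmap, hmap,
    ENNReal.toReal_ofReal E.hp0.le, ENNReal.toReal_ofReal (sub_nonneg.2 E.hp1.le)] at hsplit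
  rw [expect_apply E.μ g, hsplit, siteAverage]
  simp

section DirichletForm

variable {x : ℤ} {c : Observable}

lemma siteAverage_mul (p : ℝ) (hc : DependsOnF c {x}ᶜ) (g : Observable) :
    siteAverage p x (c * g) = c * siteAverage p x g := by
  ext ω
  have hupdate (b : Bool) : c (Function.update ω x b) = c ω :=
    apply_update_of_dependsOnF hc (by simp) ω b
  simp only [siteAverage_apply, ContinuousMap.mul_apply, hupdate]
  ring

lemma expect_mul_siteAverage (hc : DependsOnF c {x}ᶜ) (g : Observable) :
    expect E.μ (c * siteAverage E.p x g) = expect E.μ (c * g) := by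
  rw [← siteAverage_mul E.p hc, expect_siteAverage]

lemma expect_mul_siteAverage_mul_self (hc : DependsOnF c {x}ᶜ) (h : Observable) :
    expect E.μ (c * (siteAverage E.p x h * h)) =
      expect E.μ (c * (siteAverage E.p x h * siteAverage E.p x h)) := by
  have hav : DependsOnF (siteAverage E.p x h) {x}ᶜ :=
    dependsOnF_mono (dependsOnF_siteAverage E.p x (S := Set.univ) fun ω ω' hω =>
      congrArg h (funext fun z => hω z (Set.mem_univ z))) (by simp [Set.compl_eq_univ_sdiff])
  have hprod : DependsOnF ⇑(c * siteAverage E.p x h) {x}ᶜ := fun ω ω' hω => by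
    rw [ContinuousMap.mul_apply, ContinuousMap.mul_apply, hc ω ω' hω, hav ω ω' hω]
  rw [← mul_assoc, ← mul_assoc, expect_mul_siteAverage E hprod]

lemma expect_mul_sq_siteAverage_sub (hc : DependsOnF c {x}ᶜ) (h : Observable) :
    expect E.μ (c * ((siteAverage E.p x h - h) * (siteAverage E.p x h - h))) =
      expect E.μ (c * (h * h)) - expect E.μ (c * (siteAverage E.p x h * siteAverage E.p x h)) := by
  have hexpand : c * ((siteAverage E.p x h - h) * (siteAverage E.p x h - h)) =
      c * (siteAverage E.p x h * siteAverage E.p x h) - c * (siteAverage E.p x h * h) -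
        c * (siteAverage E.p x h * h) + c * (h * h) := by ring
  rw [hexpand, map_add, map_sub, map_sub, expect_mul_siteAverage_mul_self E hc]
  ring

lemma expect_mul_siteAverage_sub (hc : DependsOnF c {x}ᶜ) (h : Observable) :
    expect E.μ (h * (c * (siteAverage E.p x h - h))) =
      -expect E.μ (c * ((siteAverage E.p x h - h) * (siteAverage E.p x h - h))) := by
  have hexpand : h * (c * (siteAverage E.p x h - h)) =
      c * (siteAverage E.p x h * h) - c * (h * h) := by ring
  rw [hexpand, map_sub, expect_mul_siteAverage_mul_self E hc, expect_mul_sq_siteAverage_sub E hc]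
  ring

lemma expect_mul_weightedGen {c : ℤ → Observable} {Λ : Finset ℤ}
    (hc : ∀ x ∈ Λ, DependsOnF (c x) {x}ᶜ) (h : Observable) :
    expect E.μ (h * weightedGen E.p c Λ h) = -∑ x ∈ Λ,
      expect E.μ (c x * ((siteAverage E.p x h - h) * (siteAverage E.p x h - h))) := by
  rw [weightedGen_eq_sum, Finset.mul_sum, map_sum, ← Finset.sum_neg_distrib]
  exact Finset.sum_congr rfl fun x hx => expect_mul_siteAverage_sub E (hc x hx) h

lemma expect_mul_weightedGen_anti {c c' : ℤ → Observable} {Λ : Finset ℤ}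
    (hc : ∀ x ∈ Λ, DependsOnF (c x) {x}ᶜ) (hc' : ∀ x ∈ Λ, DependsOnF (c' x) {x}ᶜ)
    (hle : ∀ x ∈ Λ, ∀ ω, c x ω ≤ c' x ω) (h : Observable) :
    expect E.μ (h * weightedGen E.p c' Λ h) ≤ expect E.μ (h * weightedGen E.p c Λ h) := by
  rw [expect_mul_weightedGen E hc, expect_mul_weightedGen E hc', neg_le_neg_iff]
  exact Finset.sum_le_sum fun x hx => expect_mono _ fun ω =>
    mul_le_mul_of_nonneg_right (hle x hx ω) (mul_self_nonneg _)

lemma expect_weightedGen {c : ℤ → Observable} {Λ : Finset ℤ}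
    (hc : ∀ x ∈ Λ, DependsOnF (c x) {x}ᶜ) (h : Observable) :
    expect E.μ (weightedGen E.p c Λ h) = 0 := by
  rw [weightedGen_eq_sum, map_sum]
  refine Finset.sum_eq_zero fun x hx => ?_
  rw [mul_sub, map_sub, expect_mul_siteAverage E (hc x hx), sub_self]

end DirichletForm

section L2Seminorm

/-- The seminorm of `L²(μ)` on observables. -/
def l2Seminorm : Seminorm ℝ Observable :=
  (normSeminorm ℝ (Lp ℝ 2 E.μ)).comp (ContinuousMap.toLp 2 E.μ ℝ).toLinearMap

lemma continuous_l2Seminorm : Continuous (l2Seminorm E) :=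
  continuous_norm.comp (ContinuousMap.toLp 2 E.μ ℝ).continuous

lemma sq_l2Seminorm (g : Observable) : l2Seminorm E g ^ 2 = expect E.μ (g * g) := by
  change ‖ContinuousMap.toLp 2 E.μ ℝ g‖ ^ 2 = _
  rw [← real_inner_self_eq_norm_sq, ContinuousMap.inner_toLp]
  rfl

lemma l2Seminorm_le_of_expect_le {g h : Observable}
    (hle : expect E.μ (g * g) ≤ expect E.μ (h * h)) : l2Seminorm E g ≤ l2Seminorm E h := by
  rwa [← sq_l2Seminorm, ← sq_l2Seminorm, sq_le_sq₀ (apply_nonneg _ _) (apply_nonneg _ _)] at hle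

lemma l2Seminorm_le_norm (g : Observable) : l2Seminorm E g ≤ ‖g‖ := by
  rw [← sq_le_sq₀ (apply_nonneg _ _) (norm_nonneg _), sq_l2Seminorm, sq]
  exact (le_abs_self _).trans ((abs_expect_le _ _).trans (norm_mul_le _ _))

lemma expect_sq_siteAverage_sub (x : ℤ) (h : Observable) :
    expect E.μ ((siteAverage E.p x h - h) * (siteAverage E.p x h - h)) =
      expect E.μ (h * h) - expect E.μ (siteAverage E.p x h * siteAverage E.p x h) := by
  simpa only [one_mul] using expect_mul_sq_siteAverage_sub E (c := 1) (fun _ _ _ => rfl) h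

lemma expect_mul_self_nonneg (h : Observable) : 0 ≤ expect E.μ (h * h) :=
  integral_nonneg fun _ => mul_self_nonneg _

lemma l2Seminorm_siteAverage_le (x : ℤ) (h : Observable) :
    l2Seminorm E (siteAverage E.p x h) ≤ l2Seminorm E h :=
  l2Seminorm_le_of_expect_le E <| sub_nonneg.1 <|
    expect_sq_siteAverage_sub E x h ▸ expect_mul_self_nonneg E _

lemma l2Seminorm_siteAverage_sub_le (x : ℤ) (h : Observable) :
    l2Seminorm E (siteAverage E.p x h - h) ≤ l2Seminorm E h :=
  l2Seminorm_le_of_expect_le E <| by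
    rw [expect_sq_siteAverage_sub]
    exact sub_le_self _ (expect_mul_self_nonneg E _)

lemma l2Seminorm_mul_le {c : Observable} (hc0 : ∀ ω, 0 ≤ c ω) (hc1 : ∀ ω, c ω ≤ 1)
    (h : Observable) : l2Seminorm E (c * h) ≤ l2Seminorm E h :=
  l2Seminorm_le_of_expect_le E <| expect_mono _ fun ω => by
    simp only [ContinuousMap.mul_apply, mul_mul_mul_comm (c ω)]
    exact mul_le_of_le_one_left (mul_self_nonneg _) (mul_le_one₀ (hc1 ω) (hc0 ω) (hc1 ω))

lemma l2Seminorm_weightedGen_le {c : ℤ → Observable} {Λ : Finset ℤ}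
    (hc0 : ∀ x ∈ Λ, ∀ ω, 0 ≤ c x ω) (hc1 : ∀ x ∈ Λ, ∀ ω, c x ω ≤ 1) (h : Observable) :
    l2Seminorm E (weightedGen E.p c Λ h) ≤ Λ.card * l2Seminorm E h := by
  rw [weightedGen_eq_sum, ← nsmul_eq_mul]
  refine (Finset.le_sum_of_subadditive (l2Seminorm E) (map_zero _).le (map_add_le_add _) _ _).trans
    (Finset.sum_le_card_nsmul _ _ _ fun x hx => ?_)
  exact (l2Seminorm_mul_le E (hc0 x hx) (hc1 x hx) _).trans (l2Seminorm_siteAverage_sub_le E x h)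

end L2Seminorm

section SpectralGap

variable {E} {h : Observable} {Λ : Finset ℤ}

lemma variance_eq_expect_mul_self (hmean : expect E.μ h = 0) :
    variance h E.μ = expect E.μ (h * h) := by
  rw [variance_of_integral_eq_zero h.continuous.measurable.aemeasurable hmean]
  simp only [expect_apply, ContinuousMap.mul_apply, sq]

lemma expect_mul_eq_zero_of_expect_mul_self (hh : expect E.μ (h * h) = 0) (g : Observable) :
    expect E.μ (h * g) = 0 := by
  have hae : ∀ᵐ ω ∂E.μ, (h * h) ω = 0 := (integral_eq_zero_iff_of_nonneg
    (fun ω => mul_self_nonneg (h ω)) (integrable_continuousMap E.μ (h * h))).1 hh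
  refine integral_eq_zero_of_ae ?_
  filter_upwards [hae] with ω hω
  simp [mul_self_eq_zero.1 hω]

lemma gap_mul_expect_mul_self_le (hgap : 0 < gap E) (hloc : DependsOnF h Λ)
    (hmean : expect E.μ h = 0) :
    gap E * expect E.μ (h * h) ≤ -expect E.μ (h * finiteGen E.p Λ h) := by
  rcases (variance_nonneg h E.μ).eq_or_lt with hvar | hvar
  · have hzero : expect E.μ (h * h) = 0 := by rw [← variance_eq_expect_mul_self hmean, hvar]
    rw [hzero, mul_zero, expect_mul_eq_zero_of_expect_mul_self hzero, neg_zero]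
  · have hbdd : BddBelow (gapSet E) := by
      by_contra hb
      exact hgap.ne' (Real.sInf_of_not_bddBelow hb)
    have hle : gap E ≤ (-∫ ω, h ω * eastGen E.p h ω ∂E.μ) / variance h E.μ :=
      csInf_le hbdd ⟨h, ⟨Λ, hloc⟩, hvar, rfl⟩
    rw [le_div_iff₀ hvar, variance_eq_expect_mul_self hmean] at hle
    simp only [eastGen_eq_finiteGen E.p hloc] at hle
    exact hle

/-- `h` lies in the ball of radius `K` of the space of centred functions of `L²(μ)`. -/
def CenteredL2Le (E : EastProcess) (h : Observable) (K : ℝ) : Prop :=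
  expect E.μ h = 0 ∧ l2Seminorm E h ≤ K

lemma CenteredL2Le.add {g : Observable} {K K' : ℝ} (hh : CenteredL2Le E h K)
    (hg : CenteredL2Le E g K') : CenteredL2Le E (h + g) (K + K') :=
  ⟨by rw [map_add, hh.1, hg.1, add_zero],
    (map_add_le_add _ _ _).trans (add_le_add hh.2 hg.2)⟩

lemma CenteredL2Le.smul {K r : ℝ} (hr : 0 ≤ r) (hh : CenteredL2Le E h K) :
    CenteredL2Le E (r • h) (r * K) :=
  ⟨by rw [map_smul, hh.1, smul_zero], by
    rw [map_smul_eq_mul, Real.norm_of_nonneg hr]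
    exact mul_le_mul_of_nonneg_left hh.2 hr⟩

lemma CenteredL2Le.sum {g : ℤ → Observable} {K : ℝ} (hg : ∀ x ∈ Λ, CenteredL2Le E (g x) K) :
    CenteredL2Le E (∑ x ∈ Λ, g x) (Λ.card * K) := by
  refine ⟨by rw [map_sum, Finset.sum_eq_zero fun x hx => (hg x hx).1], ?_⟩
  rw [← nsmul_eq_mul]
  exact (Finset.le_sum_of_subadditive (l2Seminorm E) (map_zero _).le (map_add_le_add _) _ _).trans
    (Finset.sum_le_card_nsmul _ _ _ fun x hx => (hg x hx).2)

lemma CenteredL2Le.siteAverage {K : ℝ} (hh : CenteredL2Le E h K) (x : ℤ) :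
    CenteredL2Le E (siteAverage E.p x h) K :=
  ⟨(expect_siteAverage E x h).trans hh.1, (l2Seminorm_siteAverage_le E x h).trans hh.2⟩

/-- The generator is only assumed to be self-adjoint through its quadratic form, so the contraction
is obtained by expanding the square and taking `C` large. -/
lemma CenteredL2Le.weightedGen_add_smul {c : ℤ → Observable} {K C : ℝ} (hgap : 0 < gap E)
    (hc : ∀ x ∈ Λ, DependsOnF (c x) {x}ᶜ) (hle : ∀ x ∈ Λ, ∀ ω, constraint x ω ≤ c x ω)
    (hc1 : ∀ x ∈ Λ, ∀ ω, c x ω ≤ 1) (hloc : DependsOnF h Λ) (hC : gap E / 2 ≤ C)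
    (hcard : (Λ.card : ℝ) ^ 2 ≤ C * gap E) (hh : CenteredL2Le E h K) :
    CenteredL2Le E (weightedGen E.p c Λ h + C • h) ((C - gap E / 2) * K) := by
  set D := weightedGen E.p c Λ h
  set N := l2Seminorm E h with hN
  have hN0 : 0 ≤ N := apply_nonneg _ _
  have hC0 : 0 ≤ C := hC.trans' (by positivity)
  refine ⟨by rw [map_add, map_smul, expect_weightedGen E hc, hh.1, smul_zero, add_zero], ?_⟩
  have hconstraint (x : ℤ) : DependsOnF (constraint x) {x}ᶜ :=
    dependsOnF_mono (dependsOnF_constraint x) (by simp)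
  have hdirichlet : gap E * N ^ 2 ≤ -expect E.μ (h * D) := by
    rw [hN, sq_l2Seminorm]
    exact (gap_mul_expect_mul_self_le hgap hloc hh.1).trans
      (neg_le_neg (expect_mul_weightedGen_anti E (fun x _ => hconstraint x) hc hle h))
  have hDN : l2Seminorm E D ^ 2 ≤ C * gap E * N ^ 2 := by
    calc l2Seminorm E D ^ 2 ≤ (Λ.card * N) ^ 2 := by
          gcongr
          exact l2Seminorm_weightedGen_le E
            (fun x hx ω => (constraint_nonneg x ω).trans (hle x hx ω)) hc1 h
      _ = (Λ.card : ℝ) ^ 2 * N ^ 2 := mul_pow _ _ _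
      _ ≤ C * gap E * N ^ 2 := by gcongr
  have hexpand : l2Seminorm E (D + C • h) ^ 2 =
      l2Seminorm E D ^ 2 + 2 * C * expect E.μ (h * D) + C ^ 2 * N ^ 2 := by
    have hsq : (D + C • h) * (D + C • h) = D * D + (2 * C) • (h * D) + (C ^ 2) • (h * h) := by
      ext ω; simp; ring
    rw [hN, sq_l2Seminorm, sq_l2Seminorm, sq_l2Seminorm, hsq, map_add, map_add, map_smul, map_smul,
      smul_eq_mul, smul_eq_mul]
  have hcontract : l2Seminorm E (D + C • h) ≤ (C - gap E / 2) * N := by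
    rw [← sq_le_sq₀ (apply_nonneg _ _) (mul_nonneg (sub_nonneg.2 hC) hN0), hexpand]
    nlinarith [mul_le_mul_of_nonneg_left hdirichlet hC0,
      mul_nonneg (sq_nonneg (gap E)) (sq_nonneg N)]
  exact hcontract.trans (mul_le_mul_of_nonneg_left hh.2 (sub_nonneg.2 hC))

end SpectralGap

/-! ### Relaxation to the right of a frozen site -/

/-- The configuration equal to `ζ` on `[a, y)` and to `ω` elsewhere, as a function of `ζ`. -/
def glue (a y : ℤ) (ω : Config) : C(Config, Config) :=
  ⟨fun ζ z => if a ≤ z ∧ z < y then ζ z else ω z, by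
    refine continuous_pi fun z => ?_
    split_ifs <;> fun_prop⟩

section Glue

variable {a y x : ℤ}

lemma glue_apply (a y : ℤ) (ω ζ : Config) (z : ℤ) :
    glue a y ω ζ z = if a ≤ z ∧ z < y then ζ z else ω z := rfl

lemma glue_apply_of_mem (ω ζ : Config) (hx : x ∈ Finset.Ico a y) : glue a y ω ζ x = ζ x :=
  if_pos (Finset.mem_Ico.1 hx)

lemma glue_apply_of_notMem (ω ζ : Config) (hx : x ∉ Finset.Ico a y) : glue a y ω ζ x = ω x :=
  if_neg (mt Finset.mem_Ico.2 hx)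

lemma update_glue_of_mem (ω ζ : Config) (hx : x ∈ Finset.Ico a y) (b : Bool) :
    Function.update (glue a y ω ζ) x b = glue a y ω (Function.update ζ x b) := by
  rw [Finset.mem_Ico] at hx
  ext z
  rcases eq_or_ne z x with rfl | hz
  · simp [glue_apply, hx]
  · simp [glue_apply, Function.update_of_ne hz]

lemma update_glue_of_notMem (ω ζ : Config) (hx : x ∉ Finset.Ico a y) (b : Bool) :
    Function.update (glue a y ω ζ) x b = glue a y (Function.update ω x b) ζ := by
  rw [Finset.mem_Ico] at hx
  ext z
  rcases eq_or_ne z x with rfl | hz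
  · simp [glue_apply, hx]
  · simp [glue_apply, Function.update_of_ne hz]

lemma update_glue_self (hay : a ≤ y) (ω ζ : Config) (b : Bool) :
    Function.update (glue a y ω ζ) y b = glue a (y + 1) ω (Function.update ζ y b) := by
  ext z
  rcases eq_or_ne z y with rfl | hz
  · simp [glue_apply, hay]
  · have hlt : z < y + 1 ↔ z < y := by lia
    simp [glue_apply, Function.update_of_ne hz, hlt]

lemma dependsOnF_pullback_glue (a y : ℤ) (ω : Config) (G : Observable) :
    DependsOnF (pullback (glue a y ω) G) (Finset.Ico a y) := fun ζ ζ' hζ =>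
  congrArg G <| funext fun z => by
    by_cases hz : z ∈ Finset.Ico a y
    · rw [glue_apply_of_mem ω ζ hz, glue_apply_of_mem ω ζ' hz, hζ z hz]
    · rw [glue_apply_of_notMem ω ζ hz, glue_apply_of_notMem ω ζ' hz]

lemma pullback_glue_finiteGen (p : ℝ) (a y : ℤ) (ω : Config) (G : Observable) :
    pullback (glue a y ω) (finiteGen p (Finset.Ico a y) G) =
      weightedGen p (fun x => pullback (glue a y ω) (constraint x)) (Finset.Ico a y)
        (pullback (glue a y ω) G) := by
  rw [finiteGen_eq_sum, weightedGen_eq_sum, map_sum]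
  refine Finset.sum_congr rfl fun x hx => ?_
  ext ζ
  simp [siteAverage_apply, update_glue_of_mem ω ζ hx]

lemma dependsOnF_pullback_glue_constraint (a y x : ℤ) (ω : Config) :
    DependsOnF (pullback (glue a y ω) (constraint x)) {x}ᶜ := fun ζ ζ' hζ => by
  simp [constraint_apply, glue_apply, hζ (x + 1) (by simp)]

lemma constraint_le_pullback_glue {ω : Config} (hω : ω y = false) (hx : x ∈ Finset.Ico a y)
    (ζ : Config) : constraint x ζ ≤ pullback (glue a y ω) (constraint x) ζ := by
  rw [pullback_apply, constraint_apply x (glue a y ω ζ)]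
  by_cases hx' : x + 1 ∈ Finset.Ico a y
  · rw [glue_apply_of_mem ω ζ hx', constraint_apply]
  · have hxy : x + 1 = y := by
      rw [Finset.mem_Ico] at hx hx'
      lia
    rw [glue_apply_of_notMem ω ζ hx', hxy, hω, if_pos rfl]
    exact constraint_le_one x ζ

end Glue

variable {E : EastProcess}

lemma centeredL2Le_glue_finiteGen_Ico_add_smul {a y : ℤ} {ω : Config} {G : Observable} {K C : ℝ}
    (hgap : 0 < gap E) (hω : ω y = false) (hC : gap E / 2 ≤ C)
    (hcard : ((Finset.Ico a y).card : ℝ) ^ 2 ≤ C * gap E)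
    (hG : CenteredL2Le E (pullback (glue a y ω) G) K) :
    CenteredL2Le E (pullback (glue a y ω) (finiteGen E.p (Finset.Ico a y) G + C • G))
      ((C - gap E / 2) * K) := by
  rw [map_add, map_smul, pullback_glue_finiteGen]
  exact hG.weightedGen_add_smul hgap (fun x _ => dependsOnF_pullback_glue_constraint a y x ω)
    (fun x hx => constraint_le_pullback_glue hω hx) (fun x _ ζ => constraint_le_one x _)
    (dependsOnF_pullback_glue a y ω G) hC hcard

/-- The pairs `(y, ω)` with `ω` empty at `y ∈ [x₀, N + 1]`. An empty site `y` makes the dynamics on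
`[a, y)` ergodic. -/
abbrev EmptySiteIndex (x₀ N : ℤ) : Type :=
  {q : ℤ × Config // x₀ ≤ q.1 ∧ q.1 ≤ N + 1 ∧ q.2 q.1 = false}

/-- Pull-back to the configurations which agree with `ω` outside `[a, y)`. -/
abbrev gluedAt (a : ℤ) {x₀ N : ℤ} (i : EmptySiteIndex x₀ N) : Observable →L[ℝ] Observable :=
  pullback (glue a i.1.1 i.1.2)

lemma centeredL2Le_glue_heatBath {a x₀ N x : ℤ} {G : Observable} {K : ℝ} (hax : a ≤ x₀)
    (hG : ∀ i : EmptySiteIndex x₀ N, CenteredL2Le E (gluedAt a i G) K) (i : EmptySiteIndex x₀ N)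
    (hxN : x ≤ N) (hxa : x ≠ a - 1) (hx : x ∉ Finset.Ico a i.1.1) :
    CenteredL2Le E (gluedAt a i (heatBath E.p x G)) K := by
  obtain ⟨⟨y, ω⟩, hxy, hyN, hy⟩ := i
  change x ∉ Finset.Ico a y at hx
  have hx' : x + 1 ∉ Finset.Ico a y := by
    rw [Finset.mem_Ico] at hx ⊢
    lia
  have hvalue (ζ : Config) : heatBath E.p x G (glue a y ω ζ) =
      if ω (x + 1) = false then siteAverage E.p x G (glue a y ω ζ) else G (glue a y ω ζ) := by
    rw [heatBath_apply, glue_apply_of_notMem ω ζ hx']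
  by_cases hω : ω (x + 1) = false
  · rcases eq_or_ne x y with rfl | hne
    · have heq : pullback (glue a x ω) (heatBath E.p x G) =
          siteAverage E.p x (pullback (glue a (x + 1) ω) G) := by
        ext ζ
        simp only [pullback_apply, hvalue, if_pos hω, siteAverage_apply,
          update_glue_self (hax.trans hxy)]
      change CenteredL2Le E (pullback (glue a x ω) _) K
      rw [heq]
      have hx : CenteredL2Le E (gluedAt a ⟨⟨x + 1, ω⟩, _⟩ G) K :=
        hG ⟨⟨x + 1, ω⟩, hxy.trans (Int.le_add_one le_rfl), by simpa using hxN, hω⟩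
      exact hx.siteAverage x
    · have heq : pullback (glue a y ω) (heatBath E.p x G) =
          E.p • pullback (glue a y (Function.update ω x true)) G +
            (1 - E.p) • pullback (glue a y (Function.update ω x false)) G := by
        ext ζ
        simp [hvalue, hω, siteAverage_apply, update_glue_of_notMem ω ζ hx]
      have hupdate (b : Bool) : CenteredL2Le E (pullback (glue a y (Function.update ω x b)) G) K :=
        hG ⟨⟨y, Function.update ω x b⟩, hxy, hyN, (Function.update_of_ne hne.symm _ _).trans hy⟩
      change CenteredL2Le E (pullback (glue a y ω) _) K
      rw [heq, show K = E.p * K + (1 - E.p) * K by ring]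
      exact ((hupdate true).smul E.hp0.le).add ((hupdate false).smul (sub_nonneg.2 E.hp1.le))
  · have heq : pullback (glue a y ω) (heatBath E.p x G) = pullback (glue a y ω) G := by
      ext ζ
      simp only [pullback_apply, hvalue, if_neg hω]
    exact heq ▸ hG ⟨⟨y, ω⟩, hxy, hyN, hy⟩

lemma finiteGen_add_smul_eq_sum_heatBath_add {Λ I : Finset ℤ} (p c : ℝ) (hI : I ⊆ Λ)
    (G : Observable) :
    finiteGen p Λ G + c • G = ∑ x ∈ Λ \ I, heatBath p x G +
      (finiteGen p I G + (c - (Λ \ I).card) • G) := by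
  rw [← finiteGen_add_smul, finiteGen_eq_sum, finiteGen_eq_sum, finiteGen_eq_sum,
    ← Finset.sum_sdiff hI, sub_smul]
  abel

lemma centeredL2Le_glue_finiteGen_add_smul {a x₀ N : ℤ} {Λ : Finset ℤ} {G : Observable} {K c : ℝ}
    (hgap : 0 < gap E) (hax : a ≤ x₀) (hΛ : Finset.Icc a N ⊆ Λ) (hΛN : ∀ x ∈ Λ, x ≤ N)
    (hΛa : a - 1 ∉ Λ) (hc : Λ.card + ((Λ.card : ℝ) ^ 2 / gap E + gap E) ≤ c)
    (hG : ∀ i : EmptySiteIndex x₀ N, CenteredL2Le E (gluedAt a i G) K)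
    (i : EmptySiteIndex x₀ N) :
    CenteredL2Le E (gluedAt a i (finiteGen E.p Λ G + c • G)) ((c - gap E / 2) * K) := by
  set I := Finset.Ico a i.1.1
  have hIΛ : I ⊆ Λ := fun x hx => hΛ (by
    have hyN := i.2.2.1
    rw [Finset.mem_Ico] at hx
    rw [Finset.mem_Icc]
    lia)
  set C := c - (Λ \ I).card with hCdef
  have hC : (Λ.card : ℝ) ^ 2 / gap E + gap E ≤ C := by
    have hcard : ((Λ \ I).card : ℝ) ≤ Λ.card :=
      mod_cast Finset.card_le_card Finset.sdiff_subset
    linarith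
  have hsq : 0 ≤ (Λ.card : ℝ) ^ 2 / gap E := by positivity
  have hinside :
      CenteredL2Le E (gluedAt a i (finiteGen E.p I G + C • G)) ((C - gap E / 2) * K) := by
    refine centeredL2Le_glue_finiteGen_Ico_add_smul hgap i.2.2.2 (by linarith) ?_ (hG i)
    calc (I.card : ℝ) ^ 2 ≤ (Λ.card : ℝ) ^ 2 := by gcongr
      _ = (Λ.card : ℝ) ^ 2 / gap E * gap E := (div_mul_cancel₀ _ hgap.ne').symm
      _ ≤ C * gap E := by gcongr; linarith
  have houtside : CenteredL2Le E (∑ x ∈ Λ \ I, gluedAt a i (heatBath E.p x G))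
      ((Λ \ I).card * K) := by
    refine CenteredL2Le.sum fun x hx => ?_
    rw [Finset.mem_sdiff] at hx
    exact centeredL2Le_glue_heatBath hax hG i (hΛN x hx.1) (ne_of_mem_of_not_mem hx.1 hΛa) hx.2
  rw [finiteGen_add_smul_eq_sum_heatBath_add E.p c hIΛ, map_add, map_sum,
    show (c - gap E / 2) * K = (Λ \ I).card * K + (C - gap E / 2) * K by rw [hCdef]; ring]
  exact houtside.add hinside

/-- Being centred is a second family of seminorm bounds, with weight zero. -/
lemma centeredL2Le_expSemigroup {ι : Type*} (T : ι → Observable →L[ℝ] Observable)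
    {L : Observable →L[ℝ] Observable} {f : Observable} {c κ K t : ℝ}
    (step : ∀ (G : Observable) (C : ℝ), 0 ≤ C → (∀ i, CenteredL2Le E (T i G) C) →
      ∀ i, CenteredL2Le E (T i (L G + c • G)) (κ * C))
    (hκ : 0 ≤ κ) (hK : 0 ≤ K) (hf : ∀ i, CenteredL2Le E (T i f) K) (ht : 0 ≤ t) (i : ι) :
    CenteredL2Le E (T i (expSemigroup L t f)) (Real.exp (t * (κ - c)) * K) := by
  set ρ : ι ⊕ ι → Seminorm ℝ Observable := Sum.elim
    (fun i => absSeminorm ((expect E.μ).comp (T i)))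
    (fun i => (l2Seminorm E).comp (T i).toLinearMap) with hρ
  set w : ι ⊕ ι → ℝ := Sum.elim 0 1 with hw
  have hiff (G : Observable) (C : ℝ) :
      WeightedBound ρ w C G ↔ ∀ i, CenteredL2Le E (T i G) C := by
    simp [WeightedBound, CenteredL2Le, hρ, hw, Sum.forall, forall_and, absSeminorm_apply]
  refine (hiff _ _).1 (WeightedBound.expSemigroup_apply_of_add_smul ?_ ?_ ?_ hκ hK
    ((hiff f K).2 hf) ht) i
  · rintro (i | i)
    · exact continuous_absSeminorm _
    · exact (continuous_l2Seminorm E).comp (T i).continuous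
  · rintro (i | i) <;> simp [hw]
  · exact fun G C hC hG => (hiff _ _).2 (step G C hC ((hiff G C).1 hG))

lemma l2Seminorm_glue_finiteSemigroup_le {a a' x₀ N : ℤ} {f : Observable} {t : ℝ}
    (hgap : 0 < gap E) (ha : a' ≤ a) (hax : a ≤ x₀) (hxN : x₀ ≤ N + 1)
    (hmean : ∀ y ≥ x₀, ∀ ω, expect E.μ (pullback (glue a y ω) f) = 0) (ht : 0 ≤ t) {ω : Config}
    (hω : ω x₀ = false) :
    l2Seminorm E (pullback (glue a x₀ ω)
        (finiteSemigroup E.p ((Finset.Icc a' N).erase (a - 1)) t f))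
      ≤ Real.exp (-(gap E / 2 * t)) * ‖f‖ := by
  set Λ := (Finset.Icc a' N).erase (a - 1) with hΛ
  set c := Λ.card + ((Λ.card : ℝ) ^ 2 / gap E + gap E) with hc
  have hΛmem (x : ℤ) : x ∈ Λ ↔ x ≠ a - 1 ∧ a' ≤ x ∧ x ≤ N := by
    rw [hΛ, Finset.mem_erase, Finset.mem_Icc]
  have hΛI : Finset.Icc a N ⊆ Λ := fun x hx => (hΛmem x).2 (by rw [Finset.mem_Icc] at hx; lia)
  have hκ : 0 ≤ c - gap E / 2 := by
    have hsq : 0 ≤ (Λ.card : ℝ) ^ 2 / gap E := by positivity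
    have : (0 : ℝ) ≤ Λ.card := by positivity
    linarith
  have hdecay := centeredL2Le_expSemigroup (E := E) (L := finiteGen E.p Λ) (f := f) (K := ‖f‖)
    (fun i : EmptySiteIndex x₀ N => gluedAt a i)
    (fun G C _ hG => centeredL2Le_glue_finiteGen_add_smul hgap hax hΛI
      (fun x hx => ((hΛmem x).1 hx).2.2) (fun h => ((hΛmem _).1 h).1 rfl) hc.ge hG)
    hκ (norm_nonneg f)
    (fun i => ⟨hmean _ i.2.1 _, (l2Seminorm_le_norm E _).trans (norm_pullback_apply_le _ f)⟩) ht
    ⟨⟨x₀, ω⟩, le_rfl, hxN, hω⟩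
  rw [show t * (c - gap E / 2 - c) = -(gap E / 2 * t) by ring] at hdecay
  exact hdecay.2

/-! ### Relaxation behind an empty site -/

/-- Half the price per site of prescribing a configuration under the Bernoulli measure: a cylinder
with base of size `n` has probability at least `exp (-2 * n * siteCost E)`. -/
def siteCost (E : EastProcess) : ℝ := -Real.log (min E.p (1 - E.p)) / 2

lemma min_weight_pos (E : EastProcess) : 0 < min E.p (1 - E.p) :=
  lt_min E.hp0 (sub_pos.2 E.hp1)

lemma siteCost_nonneg (E : EastProcess) : 0 ≤ siteCost E := by
  have hlog := Real.log_nonpos (min_weight_pos E).le ((min_le_left _ _).trans E.hp1.le)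
  rw [siteCost]; linarith

lemma exp_neg_siteCost_le_measureReal_cylinderSet (E : EastProcess) (S : Finset ℤ) (σ : Config) :
    Real.exp (-(2 * siteCost E * S.card)) ≤ E.μ.real (cylinderSet S σ) := by
  have hexp : Real.exp (-(2 * siteCost E * S.card)) = ∏ _x ∈ S, min E.p (1 - E.p) := by
    rw [Finset.prod_const, ← Real.exp_log (min_weight_pos E), ← Real.exp_nat_mul, siteCost]
    congr 1; ring
  rw [hexp, Measure.real, measure_cylinderSet, ENNReal.toReal_prod]
  refine Finset.prod_le_prod (fun _ _ => (min_weight_pos E).le) fun x _ => ?_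
  split_ifs
  · rw [ENNReal.toReal_ofReal E.hp0.le]; exact min_le_left _ _
  · rw [ENNReal.toReal_ofReal (sub_nonneg.2 E.hp1.le)]; exact min_le_right _ _

lemma sq_mul_measureReal_cylinderSet_le (E : EastProcess) (F : Observable) (a y : ℤ) (ω : Config) :
    F ω ^ 2 * E.μ.real (cylinderSet (Finset.Ico a y) ω) ≤
      l2Seminorm E (pullback (glue a y ω) F) ^ 2 := by
  set C := cylinderSet (Finset.Ico a y) ω
  have hCm : MeasurableSet C := measurableSet_cylinderSet _ _
  calc F ω ^ 2 * E.μ.real C = ∫ ζ, C.indicator (fun _ => F ω ^ 2) ζ ∂E.μ := by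
        rw [integral_indicator_const _ hCm, smul_eq_mul, mul_comm]
    _ ≤ expect E.μ (pullback (glue a y ω) F * pullback (glue a y ω) F) := by
        refine integral_mono ((integrable_const _).indicator hCm) (integrable_continuousMap _ _)
          fun ζ => Set.indicator_le' (fun ζ hζ => ?_) (fun ζ _ => ?_) ζ
        · have hglue : glue a y ω ζ = ω := by
            ext z
            by_cases hz : z ∈ Finset.Ico a y
            · rw [glue_apply_of_mem _ _ hz]; exact hζ z hz
            · exact glue_apply_of_notMem _ _ hz
          rw [ContinuousMap.mul_apply, pullback_apply, hglue, sq]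
        · exact mul_self_nonneg _
    _ = _ := (sq_l2Seminorm E _).symm

lemma abs_le_exp_siteCost_mul_l2Seminorm (E : EastProcess) (F : Observable) {a y : ℤ} (hay : a ≤ y)
    (ω : Config) :
    |F ω| ≤ Real.exp (siteCost E * (y - a)) * l2Seminorm E (pullback (glue a y ω) F) := by
  have hcard : ((Finset.Ico a y).card : ℝ) = y - a := by
    rw [Int.card_Ico, ← Int.cast_natCast, Int.toNat_of_nonneg (sub_nonneg.2 hay), Int.cast_sub]
  have hweight := exp_neg_siteCost_le_measureReal_cylinderSet E (Finset.Ico a y) ω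
  rw [hcard] at hweight
  refine abs_le_of_sq_le_sq ?_ (mul_nonneg (Real.exp_pos _).le (apply_nonneg _ _))
  have hcancel :
      Real.exp (-(2 * siteCost E * (y - a))) * Real.exp (siteCost E * (y - a)) ^ 2 = 1 := by
    rw [← Real.exp_nat_mul, ← Real.exp_add, ← Real.exp_zero]; congr 1; push_cast; ring
  calc F ω ^ 2 = F ω ^ 2 * Real.exp (-(2 * siteCost E * (y - a))) *
        Real.exp (siteCost E * (y - a)) ^ 2 := by rw [mul_assoc, hcancel, mul_one]
    _ ≤ l2Seminorm E (pullback (glue a y ω) F) ^ 2 * Real.exp (siteCost E * (y - a)) ^ 2 := by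
        gcongr
        exact (mul_le_mul_of_nonneg_left hweight (sq_nonneg _)).trans
          (sq_mul_measureReal_cylinderSet_le E F a y ω)
    _ = _ := by ring

section Relaxation

variable {E : EastProcess} {f : Observable} {a b m : ℤ} {K t : ℝ}

lemma abs_expect_le_of_finiteSemigroup_le (hf : DependsOnF f (Set.Icc a b)) (hf1 : ‖f‖ ≤ 1)
    (hK : 0 ≤ K)
    (hm : ∀ z ≤ m, ∀ ω c, |f (Function.update ω z c) - f ω| ≤ K * Real.exp (m - z))
    (ht : 0 ≤ t) {ω : Config} {A : ℝ}
    (hA : ∀ᶠ N : ℤ in atTop, |finiteSemigroup E.p ((Finset.Icc a N).erase m) t f ω| ≤ A) :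
    |expect (E.P t ω) f| ≤ A + Real.exp (3 * t) * K * t := by
  have hbound : ∀ᶠ N : ℤ in atTop, |expect (E.P t ω) f| ≤
      A + Real.exp (3 * t) * (2 * Real.exp (b - (N + 1)) + K) * t := by
    filter_upwards [hA, eventually_ge_atTop b] with N hN hbN
    have hcmp := abs_expect_sub_finiteSemigroup_erase_le E hf hbN hf1 hK hm ht ω
    linarith [abs_sub_abs_le_abs_sub (expect (E.P t ω) f)
      (finiteSemigroup E.p ((Finset.Icc a N).erase m) t f ω)]
  have hexp : Tendsto (fun N : ℤ => Real.exp (b - (N + 1))) atTop (𝓝 0) := by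
    refine Real.tendsto_exp_atBot.comp (tendsto_atBot_add_const_left _ _ ?_)
    exact tendsto_neg_atTop_atBot.comp
      (tendsto_atTop_add_const_right _ _ tendsto_intCast_atTop_atTop)
  refine ge_of_tendsto ?_ hbound
  have hlim := (((hexp.const_mul 2).add_const K).const_mul (Real.exp (3 * t))).mul_const t
  simpa using hlim.const_add A

/-- The relaxation estimate: an observable that is centred on `[a, y)` for each `y ≥ x₀` relaxes at
rate `gap E / 2` behind an empty site `x₀`, up to the price of prescribing `[a, x₀)`. -/
lemma abs_expect_le_exp {a' x₀ : ℤ} (hgap : 0 < gap E) (hf : DependsOnF f (Set.Icc a' b))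
    (hf1 : ‖f‖ ≤ 1) (ha : a' ≤ a) (hax : a ≤ x₀)
    (hmean : ∀ y ≥ x₀, ∀ ω, expect E.μ (pullback (glue a y ω) f) = 0) (hK : 0 ≤ K)
    (hgrad : ∀ z ≤ a - 1, ∀ ω c,
      |f (Function.update ω z c) - f ω| ≤ K * Real.exp ((a - 1 : ℤ) - z))
    (ht : 0 ≤ t) {ω : Config} (hω : ω x₀ = false) :
    |expect (E.P t ω) f| ≤
      Real.exp (siteCost E * (x₀ - a) - gap E / 2 * t) + Real.exp (3 * t) * K * t := by
  refine abs_expect_le_of_finiteSemigroup_le hf hf1 hK hgrad ht ?_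
  filter_upwards [eventually_ge_atTop x₀] with N hN
  calc |finiteSemigroup E.p ((Finset.Icc a' N).erase (a - 1)) t f ω|
    _ ≤ Real.exp (siteCost E * (x₀ - a)) * l2Seminorm E (pullback (glue a x₀ ω)
          (finiteSemigroup E.p ((Finset.Icc a' N).erase (a - 1)) t f)) :=
        abs_le_exp_siteCost_mul_l2Seminorm E _ hax ω
    _ ≤ Real.exp (siteCost E * (x₀ - a)) * (Real.exp (-(gap E / 2 * t)) * 1) := by
        gcongr
        refine (l2Seminorm_glue_finiteSemigroup_le hgap ha hax (by omega) hmean ht hω).trans ?_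
        gcongr
    _ = _ := by rw [mul_one, ← Real.exp_add, ← sub_eq_add_neg]

end Relaxation

section Indicator

variable {A : Set Config}

lemma isClopen_of_dependsOnSet {S : Finset ℤ} (h : DependsOnSet A S) : IsClopen A := by
  have hA : A = (fun (ω : Config) (x : S) => ω x) ⁻¹' ((fun (ω : Config) (x : S) => ω x) '' A) := by
    refine (Set.subset_preimage_image _ _).antisymm fun ω ⟨η, hη, heq⟩ => ?_
    exact (h η ω fun x hx => congrFun heq ⟨x, hx⟩).1 hη
  rw [hA]
  exact (isClopen_discrete _).preimage (by fun_prop)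

lemma dependsOnF_indicator {S : Set ℤ} (h : DependsOnSet A S) :
    DependsOnF (A.indicator fun _ => 1) S := fun ω ω' hω =>
  Set.indicator_eq_indicator (h ω ω' hω) rfl

/-- The indicator of a clopen event, as an observable. -/
def indicatorObservable (hA : IsClopen A) : Observable :=
  ⟨A.indicator fun _ => 1, hA.continuous_indicator continuous_const⟩

variable (hA : IsClopen A) {ω : Config}

lemma indicatorObservable_of_mem (hω : ω ∈ A) : indicatorObservable hA ω = 1 :=
  Set.indicator_of_mem hω fun _ => (1 : ℝ)

lemma indicatorObservable_of_notMem (hω : ω ∉ A) : indicatorObservable hA ω = 0 :=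
  Set.indicator_of_notMem hω fun _ => (1 : ℝ)

lemma indicatorObservable_mem_Icc (ω : Config) : indicatorObservable hA ω ∈ Set.Icc (0 : ℝ) 1 :=
  ⟨Set.indicator_nonneg (fun _ _ => zero_le_one) ω,
    Set.indicator_le_self' (fun _ _ => zero_le_one) ω⟩

lemma norm_indicatorObservable_le : ‖indicatorObservable hA‖ ≤ 1 := by
  refine (ContinuousMap.norm_le _ zero_le_one).2 fun ω => ?_
  obtain ⟨h0, h1⟩ := indicatorObservable_mem_Icc hA ω
  rwa [Real.norm_of_nonneg h0]

lemma expect_indicatorObservable (m : Measure Config) [IsProbabilityMeasure m] :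
    expect m (indicatorObservable hA) = m.real A :=
  integral_indicator_one hA.isOpen.measurableSet

end Indicator

/-! ### Occupied regions -/

/-- The event that all sites of `I` are occupied. -/
def occupied (I : Set ℤ) : Set Config := {ω | ∀ x ∈ I, ω x = true}

section Occupied

variable {I J : Set ℤ} {ω : Config}

lemma occupied_anti (h : I ⊆ J) : occupied J ⊆ occupied I := fun _ hω x hx => hω x (h hx)

lemma notMem_occupied : ω ∉ occupied I ↔ ∃ x ∈ I, ω x = false := by
  simp [occupied]

lemma dependsOnSet_occupied (I : Set ℤ) : DependsOnSet (occupied I) I := fun ω ω' h =>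
  forall₂_congr fun x hx => by rw [h x hx]

lemma isClopen_occupied_Ico (u v : ℤ) : IsClopen (occupied (Set.Ico u v)) :=
  isClopen_of_dependsOnSet (S := Finset.Ico u v)
    (by rw [Finset.coe_Ico]; exact dependsOnSet_occupied _)

lemma measurableSet_occupied (I : Set ℤ) : MeasurableSet (occupied I) :=
  MeasurableSet.pi I.to_countable fun _ _ => measurableSet_singleton true

lemma measureReal_occupied_Ico (E : EastProcess) (u : ℤ) (l : ℕ) :
    E.μ.real (occupied (Set.Ico u (u + l))) = E.p ^ l := by
  have h : occupied (Set.Ico u (u + l)) = cylinderSet (Finset.Ico u (u + l)) fun _ => true := by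
    ext ω; simp only [occupied, cylinderSet, Set.mem_Ico, Finset.mem_Ico]
  rw [h, Measure.real, measure_cylinderSet]
  simp [ENNReal.toReal_ofReal E.hp0.le]

lemma compl_occupied_Iio (y : ℤ) :
    (occupied (Set.Iio y))ᶜ = ⋃ n : ℕ, (occupied (Set.Ico (y - n) y))ᶜ := by
  ext ω
  simp only [Set.mem_iUnion, Set.mem_compl_iff, notMem_occupied]
  constructor
  · rintro ⟨x, hx : x < y, hωx⟩
    exact ⟨(y - x).toNat, x, ⟨by omega, hx⟩, hωx⟩
  · rintro ⟨_, x, hx, hωx⟩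
    exact ⟨x, hx.2, hωx⟩

end Occupied

section OccupiedBounds

variable (E : EastProcess) {t : ℝ} {ω : Config}

lemma measureReal_compl_occupied_Ico_le (ht : 0 ≤ t) (hω : ω ∈ occupied (Set.Iio 0)) (a y : ℤ) :
    (E.P t ω).real (occupied (Set.Ico a y))ᶜ ≤ Real.exp (3 * t + y) := by
  have hclopen := (isClopen_occupied_Ico a y).compl
  set f := indicatorObservable hclopen with hf
  have hdep : DependsOnF f (Set.Icc a y) := dependsOnF_mono
    (dependsOnF_indicator fun η η' h => not_congr (dependsOnSet_occupied _ η η' h))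
    Set.Ico_subset_Icc_self
  have hdecay (u : ℤ) (η : Config) (hη : ∀ z < u, η z = true) : |f η| ≤ Real.exp (y - u) := by
    rcases le_or_gt u y with huy | huy
    · refine (f.norm_coe_le_norm η).trans ((norm_indicatorObservable_le hclopen).trans ?_)
      exact Real.one_le_exp (sub_nonneg.2 (Int.cast_le.2 huy))
    · rw [hf, indicatorObservable_of_notMem hclopen (not_not.2 fun x hx => hη x (hx.2.trans huy)),
        abs_zero]
      exact (Real.exp_pos _).le
  have hbound := abs_expect_le_of_finiteSemigroup_le (E := E) (m := a - 1) hdep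
    (norm_indicatorObservable_le hclopen) le_rfl (fun z hz η c => by
      rw [apply_update_of_dependsOnF hdep fun h => by linarith [h.1], sub_self, abs_zero, zero_mul])
    ht (ω := ω) (.of_forall fun N => abs_finiteSemigroup_le_of_ones E.hp0.le E.hp1.le
      ((Finset.Icc a N).erase (a - 1)) y hdecay ht hω)
  rw [expect_indicatorObservable, Int.cast_zero, sub_zero, ← Real.exp_add, mul_zero, zero_mul,
    add_zero] at hbound
  exact (le_abs_self _).trans hbound

lemma measureReal_compl_occupied_Iio_le (ht : 0 ≤ t) (hω : ω ∈ occupied (Set.Iio 0)) (y : ℤ) :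
    (E.P t ω).real (occupied (Set.Iio y))ᶜ ≤ Real.exp (3 * t + y) := by
  refine ENNReal.toReal_le_of_le_ofReal (Real.exp_pos _).le ?_
  have hmono : Monotone fun n : ℕ => (occupied (Set.Ico (y - n) y))ᶜ := fun n n' hn =>
    Set.compl_subset_compl.2 (occupied_anti (Set.Ico_subset_Ico_left (by omega)))
  rw [compl_occupied_Iio, hmono.measure_iUnion]
  exact iSup_le fun n => (ofReal_measureReal (μ := E.P t ω)).symm.trans_le
    (ENNReal.ofReal_le_ofReal (measureReal_compl_occupied_Ico_le E ht hω _ y))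

lemma measureReal_occupied_Ico_le (hgap : 0 < gap E) (ht : 0 ≤ t) (hω : ω 0 = false) {u : ℤ} {l : ℕ}
    (hu : u + l ≤ 0) :
    (E.P t ω).real (occupied (Set.Ico u (u + l))) ≤
      E.p ^ l + Real.exp (siteCost E * (-u) - gap E / 2 * t) := by
  have hclopen := isClopen_occupied_Ico u (u + l)
  set g := indicatorObservable hclopen with hg
  set f := g - ContinuousMap.const Config (E.p ^ l) with hf
  have hgdep : DependsOnF g (Set.Ico u (u + l)) := dependsOnF_indicator (dependsOnSet_occupied _)
  have hfdep : DependsOnF f (Set.Icc u (u + l)) := fun η η' h => congrArg (· - E.p ^ l)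
    (hgdep η η' fun x hx => h x (Set.Ico_subset_Icc_self hx))
  have hf1 : ‖f‖ ≤ 1 := (ContinuousMap.norm_le _ zero_le_one).2 fun η =>
    (abs_sub_le_of_le_of_le (indicatorObservable_mem_Icc hclopen η).1
      (indicatorObservable_mem_Icc hclopen η).2 (pow_nonneg E.hp0.le l)
      (pow_le_one₀ E.hp0.le E.hp1.le)).trans_eq (sub_zero 1)
  have hmean (y : ℤ) (hy : y ≥ 0) (η : Config) : expect E.μ (pullback (glue u y η) f) = 0 := by
    have hglue : pullback (glue u y η) f = f := by
      ext ζ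
      refine congrArg (· - E.p ^ l) (hgdep _ _ fun x hx => glue_apply_of_mem η ζ ?_)
      rw [Set.mem_Ico] at hx; rw [Finset.mem_Ico]; omega
    rw [hglue, hf, map_sub, expect_const, hg, expect_indicatorObservable, measureReal_occupied_Ico,
      sub_self]
  have hrelax := abs_expect_le_exp hgap hfdep hf1 le_rfl (by omega) hmean le_rfl
    (fun z hz η c => by
      rw [apply_update_of_dependsOnF hfdep fun h => by linarith [h.1], sub_self, abs_zero,
          zero_mul])
    ht hω
  rw [hf, map_sub, expect_const, hg, expect_indicatorObservable, Int.cast_zero, zero_sub, mul_zero,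
    zero_mul, add_zero] at hrelax
  linarith [le_abs_self ((E.P t ω).real (occupied (Set.Ico u (u + l))) - E.p ^ l)]

end OccupiedBounds

/-! ### Measures invariant for the process seen from the front -/

/-- The event that the front is at `j`. -/
def frontAt (j : ℤ) : Set Config := {ω | ω j = false ∧ ω ∈ occupied (Set.Iio j)}

section Front

variable {ω : Config} {j k : ℤ}

lemma measurableSet_frontAt (j : ℤ) : MeasurableSet (frontAt j) :=
  (measurableSet_eq_fun (measurable_pi_apply j) measurable_const).inter (measurableSet_occupied _)

lemma front_eq_of_mem_frontAt (h : ω ∈ frontAt j) : front ω = j := by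
  refine IsLeast.csInf_eq ⟨h.1, fun x (hx : ω x = false) => not_lt.1 fun hlt => ?_⟩
  exact Bool.false_ne_true (hx.symm.trans (h.2 x hlt))

lemma exists_mem_frontAt (h : ω ∈ LO) : ∃ j, ω ∈ frontAt j := by
  obtain ⟨⟨y, hy⟩, x, hx⟩ := h
  obtain ⟨j, hj, hmin⟩ := Int.exists_least_of_bdd (P := fun x => ω x = false)
    ⟨y, fun z hz => not_lt.1 fun hlt => Bool.false_ne_true (hz.symm.trans (hy z hlt))⟩ ⟨x, hx⟩
  exact ⟨j, hj, fun x hx => eq_true_of_ne_false fun h => (hmin x h).not_gt hx⟩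

lemma LO_eq_iUnion_frontAt : LO = ⋃ j, frontAt j := by
  ext ω
  rw [Set.mem_iUnion]
  exact ⟨exists_mem_frontAt, fun ⟨j, h⟩ => ⟨⟨j, h.2⟩, j, h.1⟩⟩

lemma measurableSet_LO : MeasurableSet LO := by
  rw [LO_eq_iUnion_frontAt]; exact .iUnion measurableSet_frontAt

lemma LO₀_eq_frontAt : LO₀ = frontAt 0 := by
  ext ω
  refine ⟨fun ⟨h, h0⟩ => ?_, fun h => ⟨LO_eq_iUnion_frontAt ▸ Set.mem_iUnion_of_mem 0 h,
    front_eq_of_mem_frontAt h⟩⟩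
  obtain ⟨j, hj⟩ := exists_mem_frontAt h
  rwa [← h0, front_eq_of_mem_frontAt hj]

lemma θL_zero_eq_shift (h : ω ∈ frontAt j) : θL 0 ω = shift j ω := by
  funext x
  simp only [θL, shift, front_eq_of_mem_frontAt h]
  split_ifs with hneg hzero
  · exact (h.2 _ (by rw [Set.mem_Iio]; omega)).symm
  · rw [hzero, zero_add, h.1]
  · rw [add_zero, add_comm]

lemma continuous_shift (y : ℤ) : Continuous (shift y) :=
  continuous_pi fun x => continuous_apply (x + y)

lemma shift_mem_occupied_Ico {u v : ℤ} :
    shift j ω ∈ occupied (Set.Ico u v) ↔ ω ∈ occupied (Set.Ico (u + j) (v + j)) := by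
  rw [← Set.image_add_const_Ico, occupied, occupied, Set.mem_ofPred_eq, Set.mem_ofPred_eq,
    Set.forall_mem_image]
  rfl

lemma mem_frontAt_of_shift (h : shift j ω ∈ frontAt k) : ω ∈ frontAt (k + j) := by
  refine ⟨h.1, fun x hx => ?_⟩
  simpa only [shift, sub_add_cancel] using h.2 (x - j) (show x - j < k from sub_lt_iff_lt_add.2 hx)

end Front

/-- The law at time `s` of the East process started from `ν`. -/
def law (E : EastProcess) (s : ℝ) (ν : Measure Config) : Measure Config := ν.bind (E.P s)

section Law

variable (E : EastProcess) (s : ℝ) (ν : Measure Config)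

lemma law_apply {A : Set Config} (hA : MeasurableSet A) : law E s ν A = ∫⁻ ω, E.P s ω A ∂ν :=
  Measure.bind_apply hA (E.P s).measurable.aemeasurable

instance [IsProbabilityMeasure ν] : IsProbabilityMeasure (law E s ν) :=
  ⟨by simp [law_apply E s ν .univ]⟩

variable {s} in
lemma law_add {t : ℝ} (hs : 0 ≤ s) (ht : 0 ≤ t) : law E (t + s) ν = law E s (law E t ν) := by
  rw [law, E.semigroup s t hs ht]
  exact Measure.comp_assoc.symm

variable {ν} in
lemma measureReal_law_le [IsProbabilityMeasure ν] {A : Set Config} (hA : MeasurableSet A) {c : ℝ}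
    (hc : 0 ≤ c) (h : ∀ᵐ ω ∂ν, (E.P s ω).real A ≤ c) : (law E s ν).real A ≤ c := by
  refine ENNReal.toReal_le_of_le_ofReal hc ?_
  rw [law_apply E s ν hA]
  refine (lintegral_mono_ae (g := fun _ => ENNReal.ofReal c) (h.mono fun ω hω => ?_)).trans ?_
  · rw [← ofReal_measureReal (μ := E.P s ω)]; exact ENNReal.ofReal_le_ofReal hω
  · simp

end Law

/-- `ν` is carried by `LO₀` and invariant for the process seen from the front. -/
structure IsFrontInvariant (E : EastProcess) (ν : Measure Config) : Prop where
  measure_LO₀ : ν LO₀ = 1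
  Qt_eq : ∀ t : ℝ, 0 ≤ t → Qt E t ν = ν

namespace IsFrontInvariant

variable {E : EastProcess} {ν : Measure Config} {t : ℝ}

lemma map_θL_law (h : IsFrontInvariant E ν) (ht : 0 ≤ t) : (law E t ν).map (θL 0) = ν :=
  h.Qt_eq t ht

variable [IsProbabilityMeasure ν]

lemma ae_mem_frontAt (h : IsFrontInvariant E ν) : ∀ᵐ ω ∂ν, ω ∈ frontAt 0 :=
  (prob_compl_eq_zero_iff (measurableSet_frontAt 0)).2 (LO₀_eq_frontAt ▸ h.measure_LO₀)

lemma ae_law_exists_mem_frontAt (h : IsFrontInvariant E ν) (ht : 0 ≤ t) :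
    ∀ᵐ ω ∂law E t ν, ∃ j, ω ∈ frontAt j := by
  have hLO : law E t ν LOᶜ = 0 := by
    rw [law_apply E t ν measurableSet_LO.compl, lintegral_eq_zero_iff
      ((E.P t).measurable_coe measurableSet_LO.compl)]
    filter_upwards [h.ae_mem_frontAt] with ω hω
    exact (prob_compl_eq_zero_iff measurableSet_LO).2
      (E.loStable t ht ω (LO_eq_iUnion_frontAt ▸ Set.mem_iUnion_of_mem 0 hω))
  exact (ae_iff.2 hLO : ∀ᵐ ω ∂law E t ν, ω ∈ LO).mono fun ω => exists_mem_frontAt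

lemma aemeasurable_θL (h : IsFrontInvariant E ν) (ht : 0 ≤ t) :
    AEMeasurable (θL 0) (law E t ν) := by
  by_contra hmeas
  exact IsProbabilityMeasure.ne_zero ν
    ((h.map_θL_law ht).symm.trans (Measure.map_of_not_aemeasurable hmeas))

lemma measureReal_law_compl_occupied_Iio_le (h : IsFrontInvariant E ν) (ht : 0 ≤ t) (y : ℤ) :
    (law E t ν).real (occupied (Set.Iio y))ᶜ ≤ Real.exp (3 * t + y) :=
  measureReal_law_le E t (measurableSet_occupied _).compl (Real.exp_pos _).le
    (h.ae_mem_frontAt.mono fun _ hω => measureReal_compl_occupied_Iio_le E ht hω.2 y)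

lemma measureReal_law_occupied_Ico_le (h : IsFrontInvariant E ν) (hgap : 0 < gap E) (ht : 0 ≤ t)
    {u : ℤ} {l : ℕ} (hu : u + l ≤ 0) :
    (law E t ν).real (occupied (Set.Ico u (u + l))) ≤
      E.p ^ l + Real.exp (siteCost E * (-u) - gap E / 2 * t) :=
  measureReal_law_le E t (measurableSet_occupied _)
    (add_nonneg (pow_nonneg E.hp0.le l) (Real.exp_pos _).le)
    (h.ae_mem_frontAt.mono fun _ hω => measureReal_occupied_Ico_le E hgap ht hω.1 hu)

end IsFrontInvariant

/-- Some front position `j ≥ -v` is followed, at distance `y`, by `l` consecutive occupied sites. -/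
def occupiedBehindFront (y : ℤ) (l : ℕ) (v : ℤ) : Set Config :=
  {ω | ∃ j ≥ -v, ω ∈ frontAt j ∧ ω ∈ occupied (Set.Ico (j + y) (j + y + l))}

section OccupiedBehindFront

variable {E : EastProcess} {ν : Measure Config} [IsProbabilityMeasure ν] {y v r : ℤ} {l : ℕ}
  {s τ : ℝ}

lemma measurableSet_occupiedBehindFront (y : ℤ) (l : ℕ) (v : ℤ) :
    MeasurableSet (occupiedBehindFront y l v) := by
  have h : occupiedBehindFront y l v =
      ⋃ j ≥ -v, frontAt j ∩ occupied (Set.Ico (j + y) (j + y + l)) := by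
    ext ω
    simp only [occupiedBehindFront, Set.mem_ofPred_eq, Set.mem_iUnion, Set.mem_inter_iff,
      exists_prop]
  rw [h]
  exact .iUnion fun j => .iUnion fun _ => (measurableSet_frontAt j).inter (measurableSet_occupied _)

lemma mem_occupiedBehindFront_of_shift {j : ℤ} (hj : -r ≤ j) {ω : Config}
    (h : shift j ω ∈ occupiedBehindFront y l v) : ω ∈ occupiedBehindFront y l (v + r) := by
  obtain ⟨k, hk, hfront, hocc⟩ := h
  refine ⟨k + j, by omega, mem_frontAt_of_shift hfront, ?_⟩
  convert shift_mem_occupied_Ico.1 hocc using 3 <;> ring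

lemma IsFrontInvariant.law_occupiedBehindFront_le (h : IsFrontInvariant E ν) (hs : 0 ≤ s)
    (hτ : 0 ≤ τ) (y : ℤ) (l : ℕ) (v r : ℤ) :
    law E s ν (occupiedBehindFront y l v) ≤ law E τ ν (occupied (Set.Iio (-r)))ᶜ +
      law E (τ + s) ν (occupiedBehindFront y l (v + r)) := by
  have hB := measurableSet_occupiedBehindFront y l
  have hfar := (measurableSet_occupied (Set.Iio (-r))).compl
  conv_lhs => rw [← h.map_θL_law hτ]
  rw [law_apply E s _ (hB v), lintegral_map' ((E.P s).measurable_coe (hB v)).aemeasurable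
    (h.aemeasurable_θL hτ), law_add E ν hs hτ, law_apply E s _ (hB (v + r)),
    ← lintegral_indicator_one hfar, ← lintegral_add_left (measurable_one.indicator hfar)]
  refine lintegral_mono_ae ?_
  filter_upwards [h.ae_law_exists_mem_frontAt hτ] with ω ⟨j, hj⟩
  obtain hr | hr := le_or_gt (-r) j
  · refine le_trans ?_ le_add_self
    rw [θL_zero_eq_shift hj, E.shiftComm s hs j ω,
      Measure.map_apply (continuous_shift j).measurable (hB v)]
    exact measure_mono fun ω' hω' => mem_occupiedBehindFront_of_shift hr hω'
  · refine le_trans prob_le_one (le_trans ?_ le_self_add)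
    rw [Set.indicator_of_mem (notMem_occupied.2 ⟨j, hr, hj.1⟩), Pi.one_apply]

lemma IsFrontInvariant.measureReal_law_occupiedBehindFront_le (h : IsFrontInvariant E ν)
    (hs : 0 ≤ s) (hτ : 0 ≤ τ) (y : ℤ) (l : ℕ) (v r : ℤ) :
    (law E s ν).real (occupiedBehindFront y l v) ≤ Real.exp (3 * τ - r) +
      (law E (τ + s) ν).real (occupiedBehindFront y l (v + r)) := by
  have hle := ENNReal.toReal_mono (by finiteness) (h.law_occupiedBehindFront_le hs hτ y l v r)
  rw [ENNReal.toReal_add (by finiteness) (by finiteness)] at hle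
  have hfar := h.measureReal_law_compl_occupied_Iio_le hτ (-r)
  rw [Int.cast_neg, ← sub_eq_add_neg] at hfar
  exact hle.trans (add_le_add_left hfar _)

lemma law_zero (E : EastProcess) (ν : Measure Config) : law E 0 ν = ν := by
  rw [law, E.P0]
  exact Measure.bind_dirac

lemma IsFrontInvariant.measureReal_occupied_Ico_le (h : IsFrontInvariant E ν) (hτ : 0 ≤ τ) (y : ℤ)
    (l : ℕ) (v : ℤ) :
    ν.real (occupied (Set.Ico y (y + l))) ≤
      Real.exp (3 * τ - v) + (law E τ ν).real (occupiedBehindFront y l v) := by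
  have hle := h.measureReal_law_occupiedBehindFront_le le_rfl hτ y l 0 v
  rw [law_zero, add_zero, zero_add] at hle
  refine (ENNReal.toReal_mono (by finiteness) (measure_mono_ae ?_)).trans hle
  filter_upwards [h.ae_mem_frontAt] with ω hω hocc
  exact ⟨0, by rw [neg_zero], hω, by rwa [zero_add]⟩

/-- Fronts between `-(y + l + r)` and `-(y + l)` force an occupied interval to the left of the
origin, which the dynamics fills with vacancies. -/
lemma IsFrontInvariant.measureReal_law_occupiedBehindFront_add_le (h : IsFrontInvariant E ν)
    (hgap : 0 < gap E) (hs : 0 ≤ s) (y : ℤ) (l r : ℕ) :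
    (law E s ν).real (occupiedBehindFront y l (y + l + r)) ≤
      (law E s ν).real (occupiedBehindFront y l (y + l)) +
        r * (E.p ^ l + Real.exp (siteCost E * (l + r) - gap E / 2 * s)) := by
  have hcover : occupiedBehindFront y l (y + l + r) ⊆ occupiedBehindFront y l (y + l) ∪
      ⋃ j ∈ Finset.Ico (-(y + l) - r) (-(y + l)), occupied (Set.Ico (j + y) (j + y + l)) := by
    rintro ω ⟨j, hj, hfront, hocc⟩
    refine (le_or_gt (-(y + l)) j).imp (fun hv => ⟨j, hv, hfront, hocc⟩) fun hv => ?_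
    exact Set.mem_biUnion (Finset.mem_Ico.2 (by omega)) hocc
  refine (measureReal_mono hcover).trans ((measureReal_union_le _ _).trans ?_)
  refine add_le_add_right ((measureReal_biUnion_finset_le _ _).trans ?_) _
  refine (Finset.sum_le_card_nsmul _ _
    (E.p ^ l + Real.exp (siteCost E * (l + r) - gap E / 2 * s)) fun j hj => ?_).trans ?_
  · rw [Finset.mem_Ico] at hj
    refine (h.measureReal_law_occupied_Ico_le hgap hs (by omega)).trans ?_
    have hdist : -((j + y : ℤ) : ℝ) ≤ l + r := mod_cast (by omega : -(j + y) ≤ (l : ℤ) + r)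
    have := siteCost_nonneg E
    gcongr
  · rw [Int.card_Ico, nsmul_eq_mul, show (-(y + l) - (-(y + l) - r) : ℤ) = r by ring,
      Int.toNat_natCast]

lemma IsFrontInvariant.measureReal_law_occupiedBehindFront_le_exp (h : IsFrontInvariant E ν)
    (hgap : 0 < gap E) (hs : 0 ≤ s) (hy : 0 ≤ y) (l : ℕ) :
    (law E s ν).real (occupiedBehindFront y l (y + l)) ≤
      E.p ^ l + Real.exp (siteCost E * (y + 2 * l) - gap E / 2 * s) := by
  have hsub : occupiedBehindFront y l (y + l) ⊆
      occupied (Set.Ico (-(y + 2 * l)) (-(y + 2 * l) + l)) := by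
    rintro ω ⟨j, hj, hfront, -⟩
    exact occupied_anti (fun x hx => Set.mem_Iio.2 (by have := hx.2; omega)) hfront.2
  refine (measureReal_mono hsub).trans
    ((h.measureReal_law_occupied_Ico_le hgap hs (by omega)).trans_eq ?_)
  push_cast
  rw [neg_neg]

end OccupiedBehindFront

/-- The rate `κ` of the geometric bounds `κ ^ l` in which all error terms are expressed. -/
def decayRate (E : EastProcess) : ℝ := max E.p (Real.exp (-(1 / 2)))

section DecayRate

variable (E : EastProcess) (l : ℕ)

lemma decayRate_pos : 0 < decayRate E := lt_max_of_lt_left E.hp0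

lemma decayRate_lt_one : decayRate E < 1 :=
  max_lt E.hp1 (Real.exp_lt_one_iff.2 (by norm_num))

lemma pow_le_decayRate_pow : E.p ^ l ≤ decayRate E ^ l :=
  pow_le_pow_left₀ E.hp0.le (le_max_left _ _) l

variable {l} in
lemma exp_le_decayRate_pow {z : ℝ} (hz : z ≤ -(l / 2)) : Real.exp z ≤ decayRate E ^ l :=
  calc Real.exp z ≤ Real.exp (l * -(1 / 2)) := Real.exp_le_exp.2 (hz.trans_eq (by ring))
    _ = Real.exp (-(1 / 2)) ^ l := Real.exp_nat_mul _ l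
    _ ≤ decayRate E ^ l := pow_le_pow_left₀ (Real.exp_pos _).le (le_max_right _ _) l

end DecayRate

section LongIntervals

variable {E : EastProcess} {ν : Measure Config} [IsProbabilityMeasure ν] {y : ℤ} {l : ℕ} {s : ℝ}

lemma IsFrontInvariant.measureReal_law_occupiedBehindFront_le_iterate (h : IsFrontInvariant E ν)
    (hgap : 0 < gap E) (hs : (2 * siteCost E + 1 / 2) * l ≤ gap E / 2 * s) (n : ℕ) :
    (law E s ν).real (occupiedBehindFront y l (y + l)) ≤
      (law E (s + n * (l / 6)) ν).real (occupiedBehindFront y l (y + l)) +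
        n * ((1 + 2 * l) * decayRate E ^ l) := by
  have hc := siteCost_nonneg E
  have hs0 : 0 ≤ s :=
    nonneg_of_mul_nonneg_right ((by positivity : (0 : ℝ) ≤ _).trans hs) (half_pos hgap)
  induction n with
  | zero => simp
  | succ n ih =>
    set s' := s + n * (l / 6 : ℝ) with hs'
    have hs'0 : 0 ≤ s' := by positivity
    have htime : s + (n + 1 : ℕ) * (l / 6 : ℝ) = l / 6 + s' := by push_cast [hs']; ring
    have hshift := h.measureReal_law_occupiedBehindFront_le hs'0
      (by positivity : (0 : ℝ) ≤ l / 6) y l (y + l) l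
    have hstep := h.measureReal_law_occupiedBehindFront_add_le hgap
      (by positivity : 0 ≤ l / 6 + s') y l l
    have hexp₁ : Real.exp (3 * (l / 6) - (l : ℤ)) ≤ decayRate E ^ l :=
      exp_le_decayRate_pow E (by push_cast; linarith)
    have hexp₂ : Real.exp (siteCost E * (l + l) - gap E / 2 * (l / 6 + s')) ≤ decayRate E ^ l := by
      have : gap E / 2 * s ≤ gap E / 2 * (l / 6 + s') :=
        mul_le_mul_of_nonneg_left (by rw [hs']; linarith [(by positivity : (0 : ℝ) ≤ l / 6),
          (by positivity : (0 : ℝ) ≤ n * (l / 6))]) (half_pos hgap).le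
      exact exp_le_decayRate_pow E (by linarith)
    have herr := mul_le_mul_of_nonneg_left (add_le_add (pow_le_decayRate_pow E l) hexp₂)
      (Nat.cast_nonneg (α := ℝ) l)
    rw [htime]
    push_cast
    linarith

/-- Iterate the shift inequality until the time is long enough for an interval at distance `y`
behind the front to be controlled directly. -/
lemma exists_measureReal_occupied_Ico_le (E : EastProcess) (hgap : 0 < gap E) (T R : ℕ)
    (hT : 2 * siteCost E + 1 / 2 ≤ gap E / 2 * T) :
    ∃ C : ℝ, 0 ≤ C ∧ ∀ (ν) [IsProbabilityMeasure ν], IsFrontInvariant E ν →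
      ∀ (l : ℕ) (y : ℤ), (3 * T * l : ℤ) ≤ y → y ≤ (R * l : ℤ) →
      ν.real (occupied (Set.Ico y (y + l))) ≤ C * (1 + l) * decayRate E ^ l := by
  obtain ⟨n, hn⟩ := exists_nat_gt ((siteCost E * (R + 2) + 1 / 2) / (gap E / 12))
  rw [div_lt_iff₀ (by positivity)] at hn
  refine ⟨3 + 2 * n, by positivity, fun ν _ h l y hTy hyR => ?_⟩
  have hTy' : (3 * T * l : ℝ) ≤ y := mod_cast hTy
  have hyR' : (y : ℝ) ≤ R * l := mod_cast hyR
  have hl : (0 : ℝ) ≤ l := l.cast_nonneg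
  have hs : (2 * siteCost E + 1 / 2) * l ≤ gap E / 2 * (T * l) := by
    rw [← mul_assoc]; exact mul_le_mul_of_nonneg_right hT hl
  have hstart := h.measureReal_occupied_Ico_le (τ := T * l) (by positivity) y l (y + l)
  have hiter := h.measureReal_law_occupiedBehindFront_le_iterate (y := y) hgap hs n
  have hend := h.measureReal_law_occupiedBehindFront_le_exp (s := T * l + n * (l / 6)) hgap
    (by positivity) ((by positivity : (0 : ℤ) ≤ 3 * T * l).trans hTy) l
  have hexp₁ : Real.exp (3 * (T * l) - (y + l : ℤ)) ≤ decayRate E ^ l :=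
    exp_le_decayRate_pow E (by push_cast; linarith)
  have hexp₂ : Real.exp (siteCost E * (y + 2 * l) - gap E / 2 * (T * l + n * (l / 6))) ≤
      decayRate E ^ l := by
    refine exp_le_decayRate_pow E ?_
    have hdist := mul_le_mul_of_nonneg_left hyR' (siteCost_nonneg E)
    have htime := mul_le_mul_of_nonneg_right hn.le hl
    have : 0 ≤ gap E / 2 * (T * l) := by positivity
    linarith
  have hpow := pow_le_decayRate_pow E l
  have hκ : (0 : ℝ) ≤ decayRate E ^ l := (pow_pos (decayRate_pos E) l).le
  have hsum : ν.real (occupied (Set.Ico y (y + l))) ≤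
      3 * decayRate E ^ l + n * ((1 + 2 * l) * decayRate E ^ l) := by linarith
  refine hsum.trans (sub_nonneg.1 ?_)
  ring_nf
  positivity

end LongIntervals

/-! ### Observables seen from the front -/

/-- The spatial translation `shift j` as a continuous map. -/
def shiftMap (j : ℤ) : C(Config, Config) := ⟨shift j, continuous_shift j⟩

lemma shift_update (j x : ℤ) (ω : Config) (b : Bool) :
    shift j (Function.update ω (x + j) b) = Function.update (shift j ω) x b := by
  funext z
  by_cases hz : z = x
  · subst hz; simp [shift]
  · simp [shift, hz]

/-- The event that `j` is the first empty site at or after `-r`. -/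
def firstEmptyAt (r : ℕ) (j : ℤ) : Set Config := {ω | ω j = false ∧ ω ∈ occupied (Set.Ico (-r) j)}

lemma isClopen_firstEmptyAt (r : ℕ) (j : ℤ) : IsClopen (firstEmptyAt r j) :=
  ((isClopen_discrete {false}).preimage (continuous_apply j)).inter (isClopen_occupied_Ico _ _)

lemma dependsOnSet_firstEmptyAt (r : ℕ) (j : ℤ) :
    DependsOnSet (firstEmptyAt r j) (insert j (Set.Ico (-r) j)) := fun ω ω' h =>
  and_congr (by rw [h j (Set.mem_insert _ _)])
    (dependsOnSet_occupied _ ω ω' fun x hx => h x (Set.mem_insert_of_mem _ hx))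

/-- The observable `f` translated to a front at `j`, restricted to the configurations whose first
empty site at or after `-r` is `j`. -/
def frontObservable (f : Observable) (r : ℕ) (j : ℤ) : Observable :=
  indicatorObservable (isClopen_firstEmptyAt r j) * pullback (shiftMap j) f

section FrontObservable

variable {f : Observable} {r : ℕ} {a b j : ℤ} {ω : Config}

lemma frontObservable_of_mem (h : ω ∈ firstEmptyAt r j) :
    frontObservable f r j ω = f (shift j ω) := by
  rw [frontObservable, ContinuousMap.mul_apply, indicatorObservable_of_mem _ h, one_mul]
  rfl

lemma frontObservable_of_notMem (h : ω ∉ firstEmptyAt r j) : frontObservable f r j ω = 0 := by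
  rw [frontObservable, ContinuousMap.mul_apply, indicatorObservable_of_notMem _ h, zero_mul]

lemma norm_frontObservable_le (hf1 : ‖f‖ ≤ 1) (r : ℕ) (j : ℤ) : ‖frontObservable f r j‖ ≤ 1 :=
  (norm_mul_le _ _).trans (mul_le_one₀ (norm_indicatorObservable_le _) (norm_nonneg _)
    ((norm_pullback_apply_le _ _).trans hf1))

lemma dependsOnF_indicatorObservable_firstEmptyAt (r : ℕ) (j : ℤ) :
    DependsOnF (indicatorObservable (isClopen_firstEmptyAt r j)) (Set.Iic j) :=
  dependsOnF_mono (dependsOnF_indicator (dependsOnSet_firstEmptyAt r j))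
    (Set.insert_subset Set.self_mem_Iic fun _ hx => hx.2.le)

lemma dependsOnF_frontObservable (hf : DependsOnF f (Set.Icc a b)) (ha : 0 ≤ a) :
    DependsOnF (frontObservable f r j) (Set.Icc (min (-r) j) (max j (b + j))) := by
  intro ω ω' h
  simp only [frontObservable, ContinuousMap.mul_apply, pullback_apply]
  congr 1
  · refine dependsOnF_indicator (dependsOnSet_firstEmptyAt r j) ω ω' fun x hx => h x ?_
    simp only [Set.mem_insert_iff, Set.mem_Ico, Set.mem_Icc] at hx ⊢
    omega
  · refine hf _ _ fun x hx => h (x + j) ?_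
    simp only [Set.mem_Icc] at hx ⊢
    omega

lemma siteAverage_pullback_shiftMap (p : ℝ) (j x : ℤ) (f : Observable) :
    siteAverage p (x + j) (pullback (shiftMap j) f) =
      pullback (shiftMap j) (siteAverage p x f) := by
  ext ω
  simp only [siteAverage_apply, pullback_apply, shiftMap, ContinuousMap.coe_mk, shift_update]

lemma siteAverage_frontObservable {p : ℝ} (ha : 1 ≤ a) (hf : siteAverage p a f = 0) :
    siteAverage p (a + j) (frontObservable f r j) = 0 := by
  have hleft : DependsOnF (indicatorObservable (isClopen_firstEmptyAt r j)) {a + j}ᶜ :=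
    dependsOnF_mono (dependsOnF_indicatorObservable_firstEmptyAt r j)
      fun x (hx : x ≤ j) (hxa : x = a + j) => by omega
  rw [frontObservable, siteAverage_mul p hleft, siteAverage_pullback_shiftMap, hf, map_zero,
    mul_zero]

lemma expect_pullback_glue_eq_zero {E : EastProcess} {x y : ℤ} (hxy : x < y)
    (hf : siteAverage E.p x f = 0) (ω : Config) : expect E.μ (pullback (glue x y ω) f) = 0 := by
  have hglue : siteAverage E.p x (pullback (glue x y ω) f) =
      pullback (glue x y ω) (siteAverage E.p x f) := by
    ext ζ
    simp only [siteAverage_apply, pullback_apply,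
      update_glue_of_mem ω ζ (Finset.left_mem_Ico.2 hxy)]
  rw [← expect_siteAverage E x, hglue, hf, map_zero, map_zero]

lemma abs_frontObservable_update_sub_le (hf : DependsOnF f (Set.Icc a b)) (hf1 : ‖f‖ ≤ 1) {z : ℤ}
    (hz : z ≤ a + j - 1) (ω : Config) (c : Bool) :
    |frontObservable f r j (Function.update ω z c) - frontObservable f r j ω| ≤
      2 * Real.exp (1 - a) * Real.exp ((a + j - 1 : ℤ) - z) := by
  obtain hzj | hzj := le_or_gt z j
  · have hbound (η : Config) : ‖frontObservable f r j η‖ ≤ 1 :=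
      ((frontObservable f r j).norm_coe_le_norm η).trans (norm_frontObservable_le hf1 r j)
    have hexp : 1 ≤ Real.exp (1 - a + ((a + j - 1 : ℤ) - z)) := by
      have : (z : ℝ) ≤ j := mod_cast hzj
      exact Real.one_le_exp (by push_cast; linarith)
    rw [mul_assoc, ← Real.exp_add]
    linarith [(norm_sub_le _ _).trans (add_le_add (hbound (Function.update ω z c)) (hbound ω)),
      Real.norm_eq_abs (frontObservable f r j (Function.update ω z c) - frontObservable f r j ω)]
  · have hshift : f (shift j (Function.update ω z c)) = f (shift j ω) := by
      rw [← sub_add_cancel z j, shift_update]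
      exact apply_update_of_dependsOnF hf (fun h => by have := h.1; omega) _ c
    have hind := apply_update_of_dependsOnF (dependsOnF_indicatorObservable_firstEmptyAt r j)
      (Set.notMem_Iic.2 hzj) ω c
    have heq : frontObservable f r j (Function.update ω z c) = frontObservable f r j ω := by
      simp only [frontObservable, ContinuousMap.mul_apply, pullback_apply, shiftMap,
        ContinuousMap.coe_mk, hind, hshift]
    rw [heq, sub_self, abs_zero]
    positivity

lemma abs_expect_frontObservable_le {E : EastProcess} (hgap : 0 < gap E) (ha : 1 ≤ a)
    (hf : DependsOnF f (Set.Icc a b)) (hf1 : ‖f‖ ≤ 1) (hfa : siteAverage E.p a f = 0)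
    (hj : -r ≤ j) {x₀ : ℤ} (hx₀ : a + j < x₀) {t : ℝ} (ht : 0 ≤ t) (hω : ω x₀ = false) :
    |expect (E.P t ω) (frontObservable f r j)| ≤
      Real.exp (siteCost E * (x₀ - (a + j : ℤ)) - gap E / 2 * t) +
        Real.exp (3 * t) * (2 * Real.exp (1 - a)) * t :=
  abs_expect_le_exp hgap (dependsOnF_frontObservable hf (by omega))
    (norm_frontObservable_le hf1 r j) (by omega) hx₀.le
    (fun _ hy => expect_pullback_glue_eq_zero (hx₀.trans_le hy)
      (siteAverage_frontObservable ha hfa))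
    (by positivity) (fun _ hz => abs_frontObservable_update_sub_le hf hf1 hz) ht hω

/-- Summing over the possible positions of the front recovers the observable seen from the front,
except on an event of small probability. -/
lemma abs_θL_sub_sum_frontObservable_le (hf1 : ‖f‖ ≤ 1) (r l : ℕ) (hω : ∃ k, ω ∈ frontAt k) :
    |f (θL 0 ω) - ∑ j ∈ Finset.Ico (-r : ℤ) 0, frontObservable f r j ω| ≤
      ((occupied (Set.Iio (-r)))ᶜ ∪ occupied (Set.Ico (-l) 0)).indicator
        (fun _ => 1 + (r : ℝ)) ω := by
  by_cases hbad : ω ∈ (occupied (Set.Iio (-r : ℤ)))ᶜ ∪ occupied (Set.Ico (-l) 0)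
  · rw [Set.indicator_of_mem hbad]
    refine (abs_sub _ _).trans (add_le_add ((f.norm_coe_le_norm _).trans hf1) ?_)
    have hterm : ∀ j ∈ Finset.Ico (-r : ℤ) 0, |frontObservable f r j ω| ≤ 1 := fun j _ =>
      ((frontObservable f r j).norm_coe_le_norm ω).trans (norm_frontObservable_le hf1 r j)
    refine (Finset.abs_sum_le_sum_abs _ _).trans
      ((Finset.sum_le_card_nsmul _ _ 1 hterm).trans ?_)
    simp
  · rw [Set.indicator_of_notMem hbad]
    rw [Set.mem_union, not_or, Set.notMem_compl_iff, notMem_occupied] at hbad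
    obtain ⟨hleft, x, hx, hωx⟩ := hbad
    obtain ⟨k, hk⟩ := hω
    have hrk : -r ≤ k := not_lt.1 fun hlt => Bool.false_ne_true (hk.1.symm.trans (hleft k hlt))
    have hkx : k ≤ x := not_lt.1 fun hlt => Bool.false_ne_true (hωx.symm.trans (hk.2 x hlt))
    have hother : ∀ j ∈ Finset.Ico (-r : ℤ) 0, j ≠ k → frontObservable f r j ω = 0 := by
      refine fun j _ hjk => frontObservable_of_notMem fun hj => ?_
      obtain hlt | hlt := lt_or_gt_of_ne hjk
      · exact Bool.false_ne_true (hj.1.symm.trans (hk.2 j hlt))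
      · exact Bool.false_ne_true (hk.1.symm.trans (hj.2 k ⟨hrk, hlt⟩))
    rw [Finset.sum_eq_single_of_mem k (Finset.mem_Ico.2 ⟨hrk, hkx.trans_lt hx.2⟩) hother,
      frontObservable_of_mem ⟨hk.1, fun y hy => hk.2 y hy.2⟩, θL_zero_eq_shift hk, sub_self,
      abs_zero]

end FrontObservable

lemma expect_law (E : EastProcess) (ν : Measure Config) [IsProbabilityMeasure ν] (f : Observable)
    {t : ℝ} (ht : 0 ≤ t) : expect (law E t ν) f = expect ν (semigroupObservable E f ht) := by
  have h : law E t ν = (E.P t ∘ₖ Kernel.const Unit ν) () := by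
    rw [Kernel.comp_apply, Kernel.const_apply]; rfl
  have : IsFiniteMeasure ((E.P t ∘ₖ Kernel.const Unit ν) ()) := h ▸ inferInstance
  rw [expect_apply, h, Kernel.integral_comp (integrable_continuousMap _ f), Kernel.const_apply]
  rfl

section MainEstimate

variable {E : EastProcess} {f : Observable} {a b : ℤ} {T l : ℕ} {ν : Measure Config}
  [IsProbabilityMeasure ν]

lemma abs_expect_frontObservable_le_add_indicator (hgap : 0 < gap E)
    (hT : 2 * siteCost E + 1 / 2 ≤ gap E / 2 * T) (hl : 1 ≤ l) (hal : (6 * T + 2) * l ≤ a)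
    (hf : DependsOnF f (Set.Icc a b)) (hf1 : ‖f‖ ≤ 1) (hfa : siteAverage E.p a f = 0) {r : ℕ}
    {j : ℤ} (hj : -r ≤ j) (ω : Config) :
    |expect (E.P (T * l) ω) (frontObservable f r j)| ≤ 3 * decayRate E ^ l +
      indicatorObservable (isClopen_occupied_Ico (a + j + 1) (a + j + 1 + l)) ω := by
  have hκ := pow_pos (decayRate_pos E) l
  have hl' : (1 : ℝ) ≤ l := mod_cast hl
  have hal' : (6 * T + 2) * (l : ℝ) ≤ a := mod_cast hal
  by_cases hocc : ω ∈ occupied (Set.Ico (a + j + 1) (a + j + 1 + l))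
  · rw [indicatorObservable_of_mem _ hocc]
    linarith [(abs_expect_le (E.P (T * l) ω) _).trans (norm_frontObservable_le hf1 r j)]
  rw [indicatorObservable_of_notMem _ hocc, add_zero]
  obtain ⟨x₀, ⟨hx₀, hx₀l⟩, hωx₀⟩ := notMem_occupied.1 hocc
  set t : ℝ := T * l
  have ht : 0 ≤ t := by positivity
  have ha : (1 : ℤ) ≤ a := by nlinarith
  have hrelax : Real.exp (siteCost E * (x₀ - (a + j : ℤ)) - gap E / 2 * t) ≤ decayRate E ^ l := by
    have hdist : (x₀ : ℝ) - (a + j : ℤ) ≤ l := mod_cast (by omega : x₀ - (a + j) ≤ (l : ℤ))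
    have hcost := mul_le_mul_of_nonneg_left hdist (siteCost_nonneg E)
    have htime := mul_le_mul_of_nonneg_right hT (zero_le_one.trans hl')
    have : 0 ≤ siteCost E * l := mul_nonneg (siteCost_nonneg E) (zero_le_one.trans hl')
    exact exp_le_decayRate_pow E (by linarith)
  have hgrad : Real.exp (3 * t) * (2 * Real.exp (1 - a)) * t ≤ 2 * decayRate E ^ l :=
    calc Real.exp (3 * t) * (2 * Real.exp (1 - a)) * t
      _ ≤ Real.exp (3 * t) * (2 * Real.exp (1 - a)) * Real.exp t := by
        gcongr; linarith [Real.add_one_le_exp t]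
      _ = 2 * Real.exp (3 * t + (1 - a) + t) := by rw [Real.exp_add, Real.exp_add]; ring
      _ ≤ 2 * decayRate E ^ l := by
        gcongr
        exact exp_le_decayRate_pow E (by linarith)
  linarith [abs_expect_frontObservable_le hgap ha hf hf1 hfa hj
    (by omega : a + j < x₀) ht hωx₀]

lemma abs_expect_law_frontObservable_le (hgap : 0 < gap E)
    (hT : 2 * siteCost E + 1 / 2 ≤ gap E / 2 * T) (hl : 1 ≤ l) (hal : (6 * T + 2) * l ≤ a)
    (hf : DependsOnF f (Set.Icc a b)) (hf1 : ‖f‖ ≤ 1) (hfa : siteAverage E.p a f = 0) {r : ℕ}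
    {j : ℤ} (hj : -r ≤ j) :
    |expect (law E (T * l) ν) (frontObservable f r j)| ≤
      3 * decayRate E ^ l + ν.real (occupied (Set.Ico (a + j + 1) (a + j + 1 + l))) := by
  have ht : (0 : ℝ) ≤ T * l := by positivity
  set bound : Observable := ContinuousMap.const Config (3 * decayRate E ^ l) +
    indicatorObservable (isClopen_occupied_Ico (a + j + 1) (a + j + 1 + l)) with hbound_def
  have hbound : expect ν bound =
      3 * decayRate E ^ l + ν.real (occupied (Set.Ico (a + j + 1) (a + j + 1 + l))) := by
    rw [hbound_def, map_add, expect_const, expect_indicatorObservable]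
  have hle (ω : Config) : |semigroupObservable E (frontObservable f r j) ht ω| ≤ bound ω :=
    abs_expect_frontObservable_le_add_indicator hgap hT hl hal hf hf1 hfa hj ω
  rw [expect_law E ν _ ht, ← hbound, abs_le, ← map_neg]
  exact ⟨expect_mono ν fun ω => (abs_le.1 (hle ω)).1, expect_mono ν fun ω => (abs_le.1 (hle ω)).2⟩

lemma IsFrontInvariant.abs_expect_sub_sum_frontObservable_le (h : IsFrontInvariant E ν)
    (hf1 : ‖f‖ ≤ 1) (r l : ℕ) {t : ℝ} (ht : 0 ≤ t) :
    |expect ν f - ∑ j ∈ Finset.Ico (-r : ℤ) 0, expect (law E t ν) (frontObservable f r j)| ≤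
      (1 + r) * (law E t ν).real ((occupied (Set.Iio (-r)))ᶜ ∪ occupied (Set.Ico (-l) 0)) := by
  have hbad : MeasurableSet ((occupied (Set.Iio (-r : ℤ)))ᶜ ∪ occupied (Set.Ico (-l) 0)) :=
    (measurableSet_occupied _).compl.union (measurableSet_occupied _)
  have hθ : Integrable (fun ω => f (θL 0 ω)) (law E t ν) := by
    refine Integrable.comp_aemeasurable ?_ (h.aemeasurable_θL ht)
    rw [h.map_θL_law ht]
    exact integrable_continuousMap ν f
  have hf : expect ν f = ∫ ω, f (θL 0 ω) ∂law E t ν := by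
    conv_lhs => rw [expect_apply, ← h.map_θL_law ht]
    exact integral_map (h.aemeasurable_θL ht) f.continuous.aestronglyMeasurable
  have hsum : ∑ j ∈ Finset.Ico (-r : ℤ) 0, expect (law E t ν) (frontObservable f r j) =
      ∫ ω, ∑ j ∈ Finset.Ico (-r : ℤ) 0, frontObservable f r j ω ∂law E t ν :=
    (integral_finsetSum _ fun j _ => integrable_continuousMap _ _).symm
  rw [hf, hsum, ← integral_sub hθ (integrable_finsetSum _ fun j _ => integrable_continuousMap _ _)]
  calc |∫ ω, (f (θL 0 ω) - ∑ j ∈ Finset.Ico (-r : ℤ) 0, frontObservable f r j ω) ∂law E t ν|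
    _ ≤ ∫ ω, |f (θL 0 ω) - ∑ j ∈ Finset.Ico (-r : ℤ) 0, frontObservable f r j ω| ∂law E t ν :=
      abs_integral_le_integral_abs
    _ ≤ ∫ ω, ((occupied (Set.Iio (-r : ℤ)))ᶜ ∪ occupied (Set.Ico (-l) 0)).indicator
          (fun _ => 1 + (r : ℝ)) ω ∂law E t ν :=
      integral_mono_of_nonneg (.of_forall fun _ => abs_nonneg _)
        ((integrable_const _).indicator hbad)
        ((h.ae_law_exists_mem_frontAt ht).mono fun _ => abs_θL_sub_sum_frontObservable_le hf1 r l)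
    _ = _ := by rw [integral_indicator_const _ hbad, smul_eq_mul, mul_comm]

lemma IsFrontInvariant.measureReal_law_bad_le (h : IsFrontInvariant E ν) (hgap : 0 < gap E)
    (hT : 2 * siteCost E + 1 / 2 ≤ gap E / 2 * T) {r : ℕ} (hr : (3 * T + 1) * l ≤ r) :
    (law E (T * l) ν).real ((occupied (Set.Iio (-r)))ᶜ ∪ occupied (Set.Ico (-l) 0)) ≤
      3 * decayRate E ^ l := by
  have ht : (0 : ℝ) ≤ T * l := by positivity
  have hl : (0 : ℝ) ≤ l := l.cast_nonneg
  have hr' : (3 * T + 1) * (l : ℝ) ≤ r := mod_cast hr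
  have hfar := h.measureReal_law_compl_occupied_Iio_le ht (-r)
  have hnear := h.measureReal_law_occupied_Ico_le hgap ht (u := -l) (l := l) (by omega)
  rw [neg_add_cancel] at hnear
  have hexp₁ : Real.exp (3 * (T * l) + (-r : ℤ)) ≤ decayRate E ^ l :=
    exp_le_decayRate_pow E (by push_cast; linarith)
  have hexp₂ : Real.exp (siteCost E * (-(-l : ℤ)) - gap E / 2 * (T * l)) ≤ decayRate E ^ l := by
    have htime := mul_le_mul_of_nonneg_right hT hl
    have := mul_nonneg (siteCost_nonneg E) hl
    exact exp_le_decayRate_pow E (by push_cast; linarith)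
  linarith [measureReal_union_le (μ := law E (T * l) ν) (occupied (Set.Iio (-r : ℤ)))ᶜ
    (occupied (Set.Ico (-l) 0)), pow_le_decayRate_pow E l]

/-- Sum over the front positions at time `T * l`, which with overwhelming probability lie between
`-(3 * T + 1) * l` and `-l`. -/
lemma IsFrontInvariant.abs_expect_le_of_measureReal_occupied_le (h : IsFrontInvariant E ν)
    (hgap : 0 < gap E) (hT : 2 * siteCost E + 1 / 2 ≤ gap E / 2 * T) (hl : 1 ≤ l)
    (hal : (6 * T + 2) * l ≤ a) (hf : DependsOnF f (Set.Icc a b)) (hf1 : ‖f‖ ≤ 1)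
    (hfa : siteAverage E.p a f = 0) {r : ℕ} (hr : (3 * T + 1) * l ≤ r) {q : ℝ}
    (hocc : ∀ j ∈ Finset.Ico (-r : ℤ) 0,
      ν.real (occupied (Set.Ico (a + j + 1) (a + j + 1 + l))) ≤ q) :
    |expect ν f| ≤ (1 + r) * (3 * decayRate E ^ l) + r * (3 * decayRate E ^ l + q) := by
  have hbad := mul_le_mul_of_nonneg_left (h.measureReal_law_bad_le hgap hT hr)
    (by positivity : (0 : ℝ) ≤ 1 + r)
  have hsub := h.abs_expect_sub_sum_frontObservable_le hf1 r l
    (by positivity : (0 : ℝ) ≤ T * l)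
  have hfront : ∀ j ∈ Finset.Ico (-r : ℤ) 0,
      |expect (law E (T * l) ν) (frontObservable f r j)| ≤ 3 * decayRate E ^ l + q := fun j hj =>
    (abs_expect_law_frontObservable_le hgap hT hl hal hf hf1 hfa (Finset.mem_Ico.1 hj).1).trans
      (add_le_add_right (hocc j hj) _)
  have hsum : |∑ j ∈ Finset.Ico (-r : ℤ) 0, expect (law E (T * l) ν) (frontObservable f r j)| ≤
      r * (3 * decayRate E ^ l + q) := by
    refine (Finset.abs_sum_le_sum_abs _ _).trans
      ((Finset.sum_le_card_nsmul _ _ _ hfront).trans_eq ?_)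
    rw [Int.card_Ico, nsmul_eq_mul]
    simp
  linarith [abs_sub_abs_le_abs_sub (expect ν f)
    (∑ j ∈ Finset.Ico (-r : ℤ) 0, expect (law E (T * l) ν) (frontObservable f r j))]

lemma exists_abs_expect_le (E : EastProcess) (hgap : 0 < gap E) :
    ∃ (R : ℕ) (C : ℝ), 0 < R ∧ 0 ≤ C ∧ ∀ (ν) [IsProbabilityMeasure ν], IsFrontInvariant E ν →
      ∀ (l : ℕ) (a b : ℤ) (f : Observable), 1 ≤ l → R * l ≤ a → a ≤ 2 * R * l →
      DependsOnF f (Set.Icc a b) → ‖f‖ ≤ 1 → siteAverage E.p a f = 0 →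
      |expect ν f| ≤ C * ((1 + l) ^ 2 * decayRate E ^ l) := by
  obtain ⟨T, hT⟩ := exists_nat_ge ((2 * siteCost E + 1 / 2) / (gap E / 2))
  rw [div_le_iff₀' (half_pos hgap)] at hT
  obtain ⟨C, hC, hlong⟩ :=
    exists_measureReal_occupied_Ico_le E hgap T (2 * (6 * T + 2)) hT
  refine ⟨6 * T + 2, (3 * T + 1) * (6 + C) + 3, by omega, by positivity,
    fun ν _ h l a b f hl hal hau hf hf1 hfa => ?_⟩
  have hκ := pow_pos (decayRate_pos E) l
  set r : ℕ := (3 * T + 1) * l with hr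
  have hocc : ∀ j ∈ Finset.Ico (-r : ℤ) 0, ν.real (occupied (Set.Ico (a + j + 1) (a + j + 1 + l))) ≤
      C * (1 + l) * decayRate E ^ l := by
    intro j hj
    rw [Finset.mem_Ico] at hj
    refine hlong ν h l _ ?_ ?_
    · have : (r : ℤ) = (3 * T + 1) * l := mod_cast hr
      push_cast at hal
      linarith [hj.1]
    · push_cast at hau ⊢
      linarith [hj.2]
  have htotal :=
    h.abs_expect_le_of_measureReal_occupied_le hgap hT hl (mod_cast hal) hf hf1 hfa hr.ge hocc
  have hr' : (r : ℝ) = (3 * T + 1) * l := mod_cast hr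
  rw [hr'] at htotal
  refine htotal.trans (sub_nonneg.1 ?_)
  ring_nf
  positivity

end MainEstimate

/-! ### Exponential closeness to equilibrium -/

/-- Half of the exponential decay absorbs the polynomial factor, the other half gives the rate. -/
lemma exists_sq_mul_pow_le_exp {κ : ℝ} (h0 : 0 < κ) (h1 : κ < 1) {R : ℕ} (hR : 0 < R) :
    ∃ ε K : ℝ, 0 < ε ∧ 0 ≤ K ∧ ∀ (l : ℕ) (a : ℝ), a ≤ R * (l + 1) →
      (1 + l) ^ 2 * κ ^ l ≤ K * Real.exp (-ε * a) := by
  set ρ := √κ with hρ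
  have hρ0 : 0 < ρ := Real.sqrt_pos.2 h0
  have hρ1 : ρ < 1 := by rwa [hρ, Real.sqrt_lt' one_pos, one_pow]
  have hκρ : κ = ρ * ρ := (Real.mul_self_sqrt h0.le).symm
  obtain ⟨D, hD⟩ := (tendsto_pow_const_mul_const_pow_of_lt_one 2 hρ0.le hρ1).bddAbove_range
  have hpoly (n : ℕ) : (n : ℝ) ^ 2 * ρ ^ n ≤ D := hD ⟨n, rfl⟩
  have hD0 : 0 ≤ D := by simpa using hpoly 0
  have hR0 : (0 : ℝ) < R := mod_cast hR
  have hlog : Real.log ρ < 0 := Real.log_neg hρ0 hρ1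
  refine ⟨-Real.log ρ / R, D / κ, div_pos (neg_pos.2 hlog) hR0, by positivity, fun l a ha => ?_⟩
  have hexp : ρ ^ (l + 1) ≤ Real.exp (-(-Real.log ρ / R) * a) := by
    rw [← Real.exp_log (pow_pos hρ0 (l + 1)), Real.log_pow, Real.exp_le_exp]
    calc ((l + 1 : ℕ) : ℝ) * Real.log ρ
      _ = Real.log ρ / R * (R * (l + 1)) := by push_cast; field_simp
      _ ≤ Real.log ρ / R * a := mul_le_mul_of_nonpos_left ha (div_neg_of_neg_of_pos hlog hR0).le
      _ = -(-Real.log ρ / R) * a := by ring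
  calc (1 + (l : ℝ)) ^ 2 * κ ^ l
    _ = (((l + 1 : ℕ) : ℝ) ^ 2 * ρ ^ (l + 1)) / κ * ρ ^ (l + 1) := by
      rw [hκρ]; push_cast; field_simp; ring
    _ ≤ D / κ * Real.exp (-(-Real.log ρ / R) * a) := by gcongr; exact hpoly (l + 1)

lemma exists_abs_expect_le_exp (E : EastProcess) (hgap : 0 < gap E) :
    ∃ ε K : ℝ, 0 < ε ∧ 0 ≤ K ∧ ∀ (ν) [IsProbabilityMeasure ν], IsFrontInvariant E ν →
      ∀ (a b : ℤ) (f : Observable), 1 ≤ a → DependsOnF f (Set.Icc a b) → ‖f‖ ≤ 1 →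
      siteAverage E.p a f = 0 → |expect ν f| ≤ K * Real.exp (-ε * a) := by
  obtain ⟨R, C, hR, hC, hbound⟩ := exists_abs_expect_le E hgap
  obtain ⟨ε, K, hε, hK, hexp⟩ :=
    exists_sq_mul_pow_le_exp (decayRate_pos E) (decayRate_lt_one E) hR
  refine ⟨ε, (C + 1) * K, hε, by positivity, fun ν _ h a b f ha hf hf1 hfa => ?_⟩
  obtain ⟨l, hl⟩ := Int.eq_ofNat_of_zero_le (Int.ediv_nonneg (by omega : 0 ≤ a) R.cast_nonneg)
  have hlow : R * l ≤ a := hl ▸ Int.mul_ediv_self_le (by omega)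
  have hhigh : a < R * l + R := hl ▸ Int.lt_mul_ediv_self_add (mod_cast hR)
  have hdecay : (1 + l) ^ 2 * decayRate E ^ l ≤ K * Real.exp (-ε * a) :=
    hexp l a (by rw [mul_add, mul_one]; exact mod_cast hhigh.le)
  have hpos : 0 ≤ (1 + l : ℝ) ^ 2 * decayRate E ^ l := by
    have := decayRate_pos E
    positivity
  suffices |expect ν f| ≤ (C + 1) * ((1 + l) ^ 2 * decayRate E ^ l) by
    rw [mul_assoc]
    exact this.trans (by gcongr)
  obtain rfl | hl0 := Nat.eq_zero_or_pos l
  · have := (abs_expect_le ν f).trans hf1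
    norm_num
    linarith
  · have hl1 : (R : ℤ) ≤ R * l := le_mul_of_one_le_right R.cast_nonneg (mod_cast hl0)
    linarith [hbound ν h l a b f hl0 hlow (by linarith) hf hf1 hfa]

lemma siteAverage_siteAverage (p : ℝ) (x : ℤ) (f : Observable) :
    siteAverage p x (siteAverage p x f) = siteAverage p x f :=
  siteAverage_eq_self p (dependsOnF_siteAverage p x fun _ _ h => congrArg f (funext fun y =>
    h y (Set.mem_univ y))) fun h => h.2 rfl

section Telescoping

variable {E : EastProcess} {ν : Measure Config} [IsProbabilityMeasure ν] {ε K : ℝ}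

lemma abs_expect_sub_expect_siteAverage_le
    (hcentered : ∀ (a b : ℤ) (f : Observable), 1 ≤ a → DependsOnF f (Set.Icc a b) → ‖f‖ ≤ 1 →
      siteAverage E.p a f = 0 → |expect ν f| ≤ K * Real.exp (-ε * a))
    {a b : ℤ} {f : Observable} (ha : 1 ≤ a) (hf : DependsOnF f (Set.Icc a b)) (hf1 : ‖f‖ ≤ 1) :
    |expect ν f - expect ν (siteAverage E.p a f)| ≤ 2 * (K * Real.exp (-ε * a)) := by
  have hdep : DependsOnF (siteAverage E.p a f) (Set.Icc a b) :=
    dependsOnF_mono (dependsOnF_siteAverage E.p a hf) Set.sdiff_subset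
  have hnorm := (norm_siteAverage_apply_le E.hp0.le E.hp1.le a f).trans hf1
  have h := hcentered a b ((1 / 2 : ℝ) • (f - siteAverage E.p a f)) ha
    (fun ω ω' h => by
      simp only [ContinuousMap.smul_apply, ContinuousMap.sub_apply, hf ω ω' h, hdep ω ω' h])
    (by
      rw [norm_smul, Real.norm_of_nonneg (by norm_num)]
      linarith [norm_sub_le f (siteAverage E.p a f)])
    (by rw [map_smul, map_sub, siteAverage_siteAverage, sub_self, smul_zero])
  rw [map_smul, map_sub, smul_eq_mul, abs_mul, abs_of_pos one_half_pos] at h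
  linarith

/-- Integrating out the sites `a, a + 1, …` one at a time writes `f` as its `μ`-mean plus
observables centred at their leftmost site. -/
lemma abs_expect_sub_expect_le_of_centered (hε : 0 < ε) (hK : 0 ≤ K)
    (hcentered : ∀ (a b : ℤ) (f : Observable), 1 ≤ a → DependsOnF f (Set.Icc a b) → ‖f‖ ≤ 1 →
      siteAverage E.p a f = 0 → |expect ν f| ≤ K * Real.exp (-ε * a)) (n : ℕ) :
    ∀ (a b : ℤ) (f : Observable), 1 ≤ a → b < a + n → DependsOnF f (Set.Icc a b) → ‖f‖ ≤ 1 →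
      |expect ν f - expect E.μ f| ≤ 2 * K / (1 - Real.exp (-ε)) * Real.exp (-ε * a) := by
  have hq : 0 < 1 - Real.exp (-ε) := by
    rw [sub_pos, Real.exp_lt_one_iff]; exact neg_neg_iff_pos.2 hε
  induction n with
  | zero =>
    intro a b f _ hb hf _
    have hconst : f = ContinuousMap.const Config (f fun _ => true) :=
      ContinuousMap.ext fun ω => hf _ _ fun x hx => by have := hx.1.trans hx.2; omega
    rw [hconst, expect_const, expect_const, sub_self, abs_zero]
    positivity
  | succ n ih =>
    intro a b f ha hb hf hf1
    set g := siteAverage E.p a f with hg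
    have hg1 : ‖g‖ ≤ 1 := (norm_siteAverage_apply_le E.hp0.le E.hp1.le a f).trans hf1
    have hgdep : DependsOnF g (Set.Icc (a + 1) b) :=
      dependsOnF_mono (dependsOnF_siteAverage E.p a hf) fun x hx =>
        ⟨lt_of_le_of_ne hx.1.1 (Ne.symm hx.2), hx.1.2⟩
    have hrest : |expect ν g - expect E.μ f| ≤
        2 * K / (1 - Real.exp (-ε)) * (Real.exp (-ε * a) * Real.exp (-ε)) := by
      have h := ih (a + 1) b g (by omega) (by push_cast at hb; omega) hgdep hg1
      rwa [hg, expect_siteAverage, Int.cast_add, Int.cast_one, mul_add, mul_one, Real.exp_add] at h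
    calc |expect ν f - expect E.μ f|
      _ ≤ |expect ν f - expect ν g| + |expect ν g - expect E.μ f| := abs_sub_le _ _ _
      _ ≤ _ := add_le_add (abs_expect_sub_expect_siteAverage_le hcentered ha hf hf1) hrest
      _ = _ := by field_simp; ring

end Telescoping

end EastModel

open EastModel

theorem invariant_measure_close_to_equilibrium_general (E : EastProcess) (hgap : 0 < gap E) :
    ∃ ε K : ℝ, 0 < ε ∧ ∀ ν : Measure Config, IsProbabilityMeasure ν → ν LO₀ = 1 →
      (∀ t : ℝ, 0 ≤ t → Qt E t ν = ν) → ∀ (L M : ℕ) (A : Set Config),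
        DependsOnSet A (Set.Icc (L : ℤ) (L + M)) →
        |ν.real A - E.μ.real A| ≤ K * Real.exp (-ε * L) := by
  obtain ⟨ε, K, hε, hK, hcentered⟩ := exists_abs_expect_le_exp E hgap
  have hq : 0 < 1 - Real.exp (-ε) := by
    rw [sub_pos, Real.exp_lt_one_iff]; exact neg_neg_iff_pos.2 hε
  refine ⟨ε, 2 * K / (1 - Real.exp (-ε)) + 1, hε, fun ν _ hν0 hinv L M A hA => ?_⟩
  rw [add_one_mul]
  obtain rfl | hL := Nat.eq_zero_or_pos L
  · have hle : |ν.real A - E.μ.real A| ≤ 1 :=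
      abs_sub_le_of_le_of_le measureReal_nonneg measureReal_le_one measureReal_nonneg
        measureReal_le_one |>.trans_eq (sub_zero 1)
    have : 0 ≤ 2 * K / (1 - Real.exp (-ε)) := by positivity
    simpa using hle.trans (le_add_of_nonneg_left this)
  · have hAclopen : IsClopen A :=
      isClopen_of_dependsOnSet (S := Finset.Icc (L : ℤ) (L + M)) (by rwa [Finset.coe_Icc])
    have h := abs_expect_sub_expect_le_of_centered hε hK (hcentered ν ⟨hν0, hinv⟩) (M + 1) L (L + M)
      (indicatorObservable hAclopen) (mod_cast hL) (by push_cast; omega) (dependsOnF_indicator hA)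
      (norm_indicatorObservable_le _)
    rw [expect_indicatorObservable, expect_indicatorObservable] at h
    exact h.trans (le_add_of_nonneg_right (Real.exp_pos _).le)

/-- **The invariant measure is exponentially close to equilibrium far from the front**
(Proposition 5.3(1) of the paper): if `ν` is the invariant measure of the process seen from
the front, there are `ε > 0`, `K < ∞` such that for all `L, M ∈ ℕ` and every measurable
event `A` depending only on the coordinates in `⟦L, L+M⟧`, `|ν(A) − μ(A)| ≤ K e^{-ε L}`. -/
theorem invariant_measure_close_to_equilibrium (E : EastProcess) (hgap : 0 < gap E)
    (ν : Measure Config) (hν : IsProbabilityMeasure ν) (hν0 : ν LO₀ = 1)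
    (hinv : ∀ t : ℝ, 0 ≤ t → Qt E t ν = ν)
    (huniq : ∀ ν' : Measure Config, IsProbabilityMeasure ν' → ν' LO₀ = 1 →
      (∀ t : ℝ, 0 ≤ t → Qt E t ν' = ν') → ν' = ν) :
    ∃ ε K : ℝ, 0 < ε ∧
      ∀ (L M : ℕ) (A : Set Config), MeasurableSet A →
        DependsOnSet A (Set.Icc (L : ℤ) ((L : ℤ) + (M : ℤ))) →
        |(ν A).toReal - (E.μ A).toReal| ≤ K * Real.exp (-ε * L) := by
  obtain ⟨ε, K, hε, hbound⟩ := invariant_measure_close_to_equilibrium_general E hgap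
  exact ⟨ε, K, hε, fun L M A _ hA => hbound ν hν hν0 hinv L M A hA⟩

end
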